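/- arXiv:2209.01003 — 2 statements merged into one kernel-verified Lean document; each statement's English description precedes it below -/
import Mathlib

section
/- Let d ≥ 2, p ≥ 1, and let u : ℤ^d → [0,∞) with Σ_x u(x)^p < ∞. Then there exists a Schwarz symmetric v : ℤ^d → [0,∞), equimeasurable with u, such that ‖∇v‖_p = inf{‖∇u′‖_p : u′ : ℤ^d → [0,∞) equimeasurable with u}. -/
open Filter Topology

noncomputable section

abbrev ZLat (d : ℕ) := Fin d → ℤ

def stdVec (d : ℕ) (i : Fin d) : Fin d → ℝ := fun j => if j = i then 1 else 0

/-- The set of directions E⃗ ⊆ ℝ^d. -/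
def Evec (d : ℕ) : Set (Fin d → ℝ) :=
  {e | (∃ i, e = stdVec d i) ∨
    (∃ i j : Fin d, i < j ∧ e = fun k => (stdVec d i k + stdVec d j k) / 2) ∨
    (∃ i j : Fin d, i < j ∧ e = fun k => (stdVec d i k - stdVec d j k) / 2)}

/-- A fixed enumeration of E⃗ (for d = 2 it is e₁, e₂, (e₁+e₂)/2, (e₁-e₂)/2). -/
def EvecList (d : ℕ) : List (Fin d → ℝ) :=
  ((List.finRange d).map (stdVec d)) ++
  ((List.finRange d).flatMap fun i => (List.finRange d).filterMap fun j =>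
    if i < j then some (fun k => (stdVec d i k + stdVec d j k) / 2) else none) ++
  ((List.finRange d).flatMap fun i => (List.finRange d).filterMap fun j =>
    if i < j then some (fun k => (stdVec d i k - stdVec d j k) / 2) else none)

/-- The n-th largest value of `u`, counted with multiplicity (1-indexed). -/
def nthLargest {α : Type*} (u : α → NNReal) (n : ℕ) : NNReal :=
  sSup {t | ∃ Ω : Finset α, Ω.card = n ∧ ∀ x ∈ Ω, t ≤ u x}

/-- The 1-indexed position of the point with doubled coordinate `m` in the
spiral order 0, 1, −1, 2, −2, … (for even m) resp. 1/2, −1/2, 3/2, −3/2, … (for odd m). -/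
def posIdx (m : ℤ) : ℕ := (if 0 < m then m else 1 - m).toNat

/-- `x` and `y` lie on a common line with direction `e`. -/
def sameLine {d : ℕ} (e : Fin d → ℝ) (x y : ZLat d) : Prop :=
  ∃ c : ℝ, (fun i => (x i : ℝ) - (y i : ℝ)) = c • e

/-- Twice the inner product ⟨e, x⟩, as an integer. -/
def pairing {d : ℕ} (e : Fin d → ℝ) (x : ZLat d) : ℤ :=
  ⌊2 * ∑ i, e i * (x i : ℝ)⌋

/-- One-step rearrangement `R_e`. -/
def stepR {d : ℕ} (e : Fin d → ℝ) (u : ZLat d → NNReal) : ZLat d → NNReal :=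
  fun x => nthLargest (fun y : {y : ZLat d // sameLine e x y} => u y.1) (posIdx (pairing e x))

/-- `R^k u` : k successive one-step rearrangements cycling through the fixed enumeration. -/
def iterR (d : ℕ) (u : ZLat d → NNReal) : ℕ → ZLat d → NNReal
  | 0 => u
  | k + 1 => stepR ((EvecList d).getD (k % (EvecList d).length) 0) (iterR d u k)

/-- The Schwarz rearrangement on ℤ^d : pointwise limit of `R^k u`. -/
def RZd (d : ℕ) (u : ZLat d → NNReal) : ZLat d → NNReal :=
  fun x => limUnder atTop fun k => iterR d u k x

def Admissible {α : Type*} (u : α → NNReal) : Prop :=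
  ∀ t : NNReal, 0 < t → {x | t < u x}.Finite

def Equimeasurable {α : Type*} (u v : α → NNReal) : Prop :=
  ∀ t : NNReal, 0 < t → Nonempty ({x | t < u x} ≃ {x | t < v x})

/-- Graph distance (ℓ¹ distance) on the lattice ℤ^d. -/
def latDist {d : ℕ} (x y : ZLat d) : ℕ := ∑ i, (x i - y i).natAbs

/-- The i-th standard basis vector of ℤ^d. -/
def latE {d : ℕ} (i : Fin d) : ZLat d := fun j => if j = i then 1 else 0

/-- ‖∇u‖_p^p : the p-Sobolev energy, summing over each edge {x, x+e_i} once. -/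
def gradEnergy (d : ℕ) (p : ℝ) (u : ZLat d → NNReal) : ENNReal :=
  ∑' (x : ZLat d) (i : Fin d), ENNReal.ofReal (|(u (x + latE i) : ℝ) - (u x : ℝ)| ^ p)

/-- ‖∇u‖_p. -/
def gradNorm (d : ℕ) (p : ℝ) (u : ZLat d → NNReal) : ENNReal :=
  gradEnergy d p u ^ (1 / p)

/-- Graph automorphism of the lattice graph ℤ^d. -/
def IsLatAuto {d : ℕ} (σ : ZLat d ≃ ZLat d) : Prop :=
  ∀ x y : ZLat d, latDist (σ x) (σ y) = 1 ↔ latDist x y = 1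

def Supermodular (G : NNReal → NNReal → NNReal) : Prop :=
  ∀ s t s₀ t₀ : NNReal, G (s + s₀) t + G s (t + t₀) ≤ G (s + s₀) (t + t₀) + G s t

def StrictlySupermodular (G : NNReal → NNReal → NNReal) : Prop :=
  ∀ s t s₀ t₀ : NNReal, 0 < s₀ → 0 < t₀ →
    G (s + s₀) t + G s (t + t₀) < G (s + s₀) (t + t₀) + G s t

/-- The values of `u` are strictly decreasing: a₁ > a₂ > a₃ > ⋯ . -/
def StrictRan {α : Type*} (u : α → NNReal) : Prop :=
  ∀ n : ℕ, 0 < n → nthLargest u (n + 1) < nthLargest u n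

/-! ### The reference point and the (squared) distance to it -/

/-- Coordinates of the reference point. -/
def refA (d : ℕ) (i : Fin d) : ℝ := ((d : ℝ) - (i : ℕ)) / (2 * d + 2)

/-- Squared distance to the reference point. -/
def phi {d : ℕ} (x : ZLat d) : ℝ := ∑ i, ((x i : ℝ) - refA d i) ^ 2

lemma refA_pos (d : ℕ) (i : Fin d) : 0 < refA d i := by
  have : ((i : ℕ) : ℝ) < d := by exact_mod_cast i.2
  unfold refA
  apply div_pos <;> [linarith; positivity]

lemma refA_lt (d : ℕ) (i : Fin d) : refA d i < 1 / 2 := by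
  have : (0 : ℝ) ≤ ((i : ℕ) : ℝ) := by positivity
  unfold refA
  rw [div_lt_div_iff₀ (by positivity) (by norm_num)]
  linarith

lemma refA_anti (d : ℕ) {i j : Fin d} (h : i < j) : refA d j < refA d i := by
  have : ((i : ℕ) : ℝ) < (j : ℕ) := by exact_mod_cast h
  unfold refA
  apply div_lt_div_of_pos_right _ (by positivity)
  linarith

lemma phi_nonneg {d : ℕ} (x : ZLat d) : 0 ≤ phi x :=
  Finset.sum_nonneg fun _ _ => sq_nonneg _

/-- A direction `δ` together with the integer functional `P` (twice the pairing). -/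
structure IsDir {d : ℕ} (δ : ZLat d) (P : ZLat d → ℤ) (α κ : ℝ) : Prop where
  add : ∀ x y, P (x + y) = P x + P y
  two : P δ = 2
  apos : 0 < α
  alt : α < 1
  kpos : 0 < κ
  hphi : ∀ (x : ZLat d) (m : ℤ), phi (x + m • δ) = phi x + κ * (m * ((P x : ℝ) - α + m))
  perm : ∃ π : Equiv.Perm (Fin d), ∀ i : Fin d,
    (latE i - P (latE i) • δ = latE (π i)) ∨ (latE i - P (latE i) • δ = - latE (π i))
  cross : ∀ i : Fin d, (2 ≤ P (latE i) → latE i = δ) ∧ (P (latE i) ≤ -2 → latE i = -δ)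

/-- Reflection. -/
def srefl {d : ℕ} (δ : ZLat d) (P : ZLat d → ℤ) (k : ℤ) (x : ZLat d) : ZLat d :=
  x + (k - P x) • δ

section dir
variable {d : ℕ} {δ : ZLat d} {P : ZLat d → ℤ} {α κ : ℝ}

lemma IsDir.zero (h : IsDir δ P α κ) : P 0 = 0 := by
  have := h.add 0 0
  simp at this
  exact this

lemma IsDir.smul (h : IsDir δ P α κ) (m : ℤ) (x : ZLat d) : P (m • x) = m * P x := by
  let f : ZLat d →+ ℤ := ⟨⟨P, h.zero⟩, h.add⟩
  have := map_zsmul f m x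
  simpa [f] using this

lemma IsDir.P_refl (h : IsDir δ P α κ) (k : ℤ) (x : ZLat d) :
    P (srefl δ P k x) = 2 * k - P x := by
  unfold srefl
  rw [h.add, h.smul, h.two]; ring

lemma IsDir.refl_refl (h : IsDir δ P α κ) (k : ℤ) (x : ZLat d) :
    srefl δ P k (srefl δ P k x) = x := by
  conv_lhs => rw [srefl, h.P_refl]
  unfold srefl
  rw [add_assoc, ← add_smul]
  have : k - P x + (k - (2 * k - P x)) = 0 := by ring
  rw [this]; simp

lemma IsDir.phi_refl (h : IsDir δ P α κ) (k : ℤ) (x : ZLat d) :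
    phi (srefl δ P k x) = phi x + κ * (((k : ℝ) - P x) * ((k : ℝ) - α)) := by
  unfold srefl
  rw [h.hphi]
  push_cast
  ring

lemma IsDir.refl_add (h : IsDir δ P α κ) (k : ℤ) (x y : ZLat d) :
    srefl δ P k (x + y) = srefl δ P k x + (y - P y • δ) := by
  unfold srefl
  rw [h.add]
  have : k - (P x + P y) = (k - P x) - P y := by ring
  rw [this, sub_smul]; abel

lemma IsDir.kα (h : IsDir δ P α κ) (k : ℤ) : (1 ≤ k ∧ 0 < (k : ℝ) - α) ∨ (k ≤ 0 ∧ (k : ℝ) - α < 0) := by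
  rcases le_or_gt k 0 with hk | hk
  · right
    have : (k : ℝ) ≤ 0 := by exact_mod_cast hk
    exact ⟨hk, by linarith [h.apos]⟩
  · left
    have hk : 1 ≤ k := hk
    have : (1 : ℝ) ≤ k := by exact_mod_cast hk
    exact ⟨hk, by linarith [h.alt]⟩

lemma IsDir.lt_iff (h : IsDir δ P α κ) (k : ℤ) (x : ZLat d) :
    phi x < phi (srefl δ P k x) ↔ (1 ≤ k ∧ P x < k) ∨ (k ≤ 0 ∧ k < P x) := by
  rw [h.phi_refl, lt_add_iff_pos_right, mul_pos_iff_of_pos_left h.kpos]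
  rcases h.kα k with ⟨h1, h2⟩ | ⟨h1, h2⟩
  · rw [mul_pos_iff_of_pos_right h2, sub_pos, Int.cast_lt]
    constructor
    · intro h; exact Or.inl ⟨h1, h⟩
    · omega
  · rw [← neg_mul_neg, mul_pos_iff_of_pos_right (neg_pos.2 h2), neg_pos, sub_neg, Int.cast_lt]
    constructor
    · intro h; exact Or.inr ⟨h1, h⟩
    · omega

lemma IsDir.gt_iff (h : IsDir δ P α κ) (k : ℤ) (x : ZLat d) :
    phi (srefl δ P k x) < phi x ↔ (1 ≤ k ∧ k < P x) ∨ (k ≤ 0 ∧ P x < k) := by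
  have := h.lt_iff k (srefl δ P k x)
  rw [h.refl_refl, h.P_refl] at this
  rw [this]
  omega

lemma IsDir.fixed (h : IsDir δ P α κ) (k : ℤ) (x : ZLat d)
    (h1 : ¬ phi x < phi (srefl δ P k x)) (h2 : ¬ phi (srefl δ P k x) < phi x) :
    srefl δ P k x = x := by
  rw [h.lt_iff] at h1
  rw [h.gt_iff] at h2
  have : k - P x = 0 := by omega
  unfold srefl
  rw [this]; simp

lemma IsDir.crossing (h : IsDir δ P α κ) (k : ℤ) (x : ZLat d) (i : Fin d)
    (hx : phi x < phi (srefl δ P k x)) 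
    (hy : phi (srefl δ P k (x + latE i)) < phi (x + latE i)) :
    x + latE i = srefl δ P k x := by
  rw [h.lt_iff] at hx
  rw [h.gt_iff, h.add] at hy
  have hc := h.cross i
  have ht := h.two
  have hn : P (-δ) = -2 := by
    have := h.smul (-1) δ
    rw [ht] at this; simpa using this
  by_cases h2 : 2 ≤ P (latE i)
  · have e := hc.1 h2
    rw [e, ht] at hy
    have : k - P x = 1 := by omega
    unfold srefl
    rw [this, e]; simp
  · have h3 : P (latE i) ≤ -2 := by omega
    have e := hc.2 h3
    rw [e, hn] at hy
    have : k - P x = -1 := by omega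
    unfold srefl
    rw [this, e]; simp

lemma IsDir.crossing' (h : IsDir δ P α κ) (k : ℤ) (x : ZLat d) (i : Fin d)
    (hx : phi (srefl δ P k x) < phi x) 
    (hy : phi (x + latE i) < phi (srefl δ P k (x + latE i))) :
    x + latE i = srefl δ P k x := by
  rw [h.gt_iff] at hx
  rw [h.lt_iff, h.add] at hy
  have hc := h.cross i
  have ht := h.two
  have hn : P (-δ) = -2 := by
    have := h.smul (-1) δ
    rw [ht] at this; simpa using this
  by_cases h2 : 2 ≤ P (latE i)
  · have e := hc.1 h2
    rw [e, ht] at hy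
    have : k - P x = 1 := by omega
    unfold srefl
    rw [this, e]; simp
  · have h3 : P (latE i) ≤ -2 := by omega
    have e := hc.2 h3
    rw [e, hn] at hy
    have : k - P x = -1 := by omega
    unfold srefl
    rw [this, e]; simp

end dir

/-! ### Convexity inequality -/

lemma abs_rpow_conv {p : ℝ} (hp : 1 ≤ p) : ConvexOn ℝ Set.univ fun x : ℝ => |x| ^ p := by
  refine ⟨convex_univ, fun x _ y _ a b ha hb hab => ?_⟩
  have h1 := (convexOn_rpow hp).2 (Set.mem_Ici.2 (abs_nonneg x)) (Set.mem_Ici.2 (abs_nonneg y)) ha hb hab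
  refine le_trans ?_ h1
  apply Real.rpow_le_rpow (abs_nonneg _) _ (by linarith)
  simp only [smul_eq_mul]
  calc |a * x + b * y| ≤ |a * x| + |b * y| := abs_add_le _ _
    _ = _ := by rw [abs_mul, abs_mul, abs_of_nonneg ha, abs_of_nonneg hb]

lemma conv_four {f : ℝ → ℝ} (hf : ConvexOn ℝ Set.univ f) {x y s t : ℝ} (hs : y ≤ s) (hs' : s ≤ x)
    (e : s + t = x + y) : f s + f t ≤ f x + f y := by
  rcases eq_or_lt_of_le (hs.trans hs') with h | h
  · have : s = x := by linarith
    have : t = y := by linarith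
    subst_vars; exact le_rfl
  · have hxy : 0 < x - y := by linarith
    have ha : 0 ≤ (s - y) / (x - y) := div_nonneg (by linarith) hxy.le
    have hb : 0 ≤ (x - s) / (x - y) := div_nonneg (by linarith) hxy.le
    have hab : (s - y) / (x - y) + (x - s) / (x - y) = 1 := by field_simp; ring
    have h1 := hf.2 (Set.mem_univ x) (Set.mem_univ y) ha hb hab
    have h2 := hf.2 (Set.mem_univ x) (Set.mem_univ y) hb ha (by linarith)
    simp only [smul_eq_mul] at h1 h2
    have e1 : (s - y) / (x - y) * x + (x - s) / (x - y) * y = s := by field_simp; ring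
    have e2 : (x - s) / (x - y) * x + (s - y) / (x - y) * y = t := by
      have : t = x + y - s := by linarith
      subst this; field_simp; ring
    rw [e1] at h1
    rw [e2] at h2
    calc f s + f t ≤ _ := add_le_add h1 h2
      _ = ((s - y) / (x - y) + (x - s) / (x - y)) * (f x + f y) := by ring
      _ = _ := by rw [hab, one_mul]

lemma two_point {p : ℝ} (hp : 1 ≤ p) (a b c e : ℝ) :
    |max c e - max a b| ^ p + |min c e - min a b| ^ p ≤ |c - a| ^ p + |e - b| ^ p := by
  have key := abs_rpow_conv hp
  rcases le_total a b with h1 | h1 <;> rcases le_total c e with h2 | h2 <;>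
    simp only [max_eq_left, max_eq_right, min_eq_left, min_eq_right, h1, h2]
  · linarith
  · exact conv_four key (y := e - b) (x := c - a) (by linarith) (by linarith) (by ring)
  · rw [add_comm (|c - a| ^ p)]
    exact conv_four key (y := c - a) (x := e - b) (by linarith) (by linarith) (by ring)
  · linarith

/-! ### Polarization -/

/-- Polarization of `u`. -/
def pol {d : ℕ} (δ : ZLat d) (P : ZLat d → ℤ) (k : ℤ) (u : ZLat d → NNReal) : ZLat d → NNReal :=
  fun x => if phi x < phi (srefl δ P k x) then max (u x) (u (srefl δ P k x))
    else min (u x) (u (srefl δ P k x))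

section pol
variable {d : ℕ} {δ : ZLat d} {P : ZLat d → ℤ} {α κ : ℝ}

lemma pol_plus (h : IsDir δ P α κ) (k : ℤ) (u : ZLat d → NNReal) (x : ZLat d)
    (hx : ¬ phi (srefl δ P k x) < phi x) :
    pol δ P k u x = max (u x) (u (srefl δ P k x)) ∧
    pol δ P k u (srefl δ P k x) = min (u x) (u (srefl δ P k x)) := by
  unfold pol
  rw [h.refl_refl]
  by_cases h2 : phi x < phi (srefl δ P k x)
  · simp [h2, hx, min_comm]
  · simp [h.fixed k x h2 hx]

lemma pol_minus (h : IsDir δ P α κ) (k : ℤ) (u : ZLat d → NNReal) (x : ZLat d)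
    (hx : ¬ phi x < phi (srefl δ P k x)) :
    pol δ P k u x = min (u x) (u (srefl δ P k x)) ∧
    pol δ P k u (srefl δ P k x) = max (u x) (u (srefl δ P k x)) := by
  unfold pol
  rw [h.refl_refl]
  by_cases h2 : phi (srefl δ P k x) < phi x
  · simp [h2, hx, max_comm]
  · simp [h.fixed k x hx h2]

lemma pol_edge (h : IsDir δ P α κ) {p : ℝ} (hp : 1 ≤ p) (k : ℤ) (u : ZLat d → NNReal) (x : ZLat d)
    (i : Fin d) :
    |(pol δ P k u (x + latE i) : ℝ) - pol δ P k u x| ^ p +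
      |(pol δ P k u (srefl δ P k (x + latE i)) : ℝ) - pol δ P k u (srefl δ P k x)| ^ p ≤
    |(u (x + latE i) : ℝ) - u x| ^ p +
      |(u (srefl δ P k (x + latE i)) : ℝ) - u (srefl δ P k x)| ^ p := by
  have spec : x + latE i = srefl δ P k x →
    |(pol δ P k u (x + latE i) : ℝ) - pol δ P k u x| ^ p +
      |(pol δ P k u (srefl δ P k (x + latE i)) : ℝ) - pol δ P k u (srefl δ P k x)| ^ p ≤
    |(u (x + latE i) : ℝ) - u x| ^ p +
      |(u (srefl δ P k (x + latE i)) : ℝ) - u (srefl δ P k x)| ^ p := by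
    intro e
    rw [e, h.refl_refl]
    have hh : ∀ a b : ℝ, |min a b - max a b| = |b - a| := by
      intro a b
      rcases le_total a b with h | h <;> simp [h, abs_sub_comm]
    have hh' : ∀ a b : ℝ, |max a b - min a b| = |b - a| := by
      intro a b
      rw [abs_sub_comm, hh]
    by_cases hx : phi x < phi (srefl δ P k x)
    · obtain ⟨e1, e2⟩ := pol_plus h k u x hx.not_gt
      rw [e1, e2]
      push_cast
      rw [hh, hh', abs_sub_comm (u x : ℝ)]
    · obtain ⟨e1, e2⟩ := pol_minus h k u x hx
      rw [e1, e2]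
      push_cast
      rw [hh, hh', abs_sub_comm (u x : ℝ)]
  by_cases hx : phi (srefl δ P k x) < phi x
  · by_cases hy : phi (x + latE i) < phi (srefl δ P k (x + latE i))
    · exact spec (h.crossing' k x i hx hy)
    · obtain ⟨e1, e2⟩ := pol_minus h k u x hx.not_gt
      obtain ⟨e3, e4⟩ := pol_minus h k u _ hy
      rw [e1, e2, e3, e4]
      push_cast
      rw [add_comm]
      exact two_point hp _ _ _ _
  · by_cases hy : phi (srefl δ P k (x + latE i)) < phi (x + latE i)
    · by_cases hx' : phi x < phi (srefl δ P k x)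
      · exact spec (h.crossing k x i hx' hy)
      · obtain ⟨e1, e2⟩ := pol_minus h k u x hx'
        obtain ⟨e3, e4⟩ := pol_minus h k u _ hy.not_gt
        rw [e1, e2, e3, e4]
        push_cast
        rw [add_comm]
        exact two_point hp _ _ _ _
    · obtain ⟨e1, e2⟩ := pol_plus h k u x hx
      obtain ⟨e3, e4⟩ := pol_plus h k u _ hy
      rw [e1, e2, e3, e4]
      push_cast
      exact two_point hp _ _ _ _

/-- The reflection as a permutation. -/
def reflE (h : IsDir δ P α κ) (k : ℤ) : ZLat d ≃ ZLat d where
  toFun := srefl δ P k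
  invFun := srefl δ P k
  left_inv := h.refl_refl k
  right_inv := h.refl_refl k

lemma energy_swap (d : ℕ) (p : ℝ) (u : ZLat d → NNReal) :
    gradEnergy d p u =
      ∑ i : Fin d, ∑' x : ZLat d, ENNReal.ofReal (|(u (x + latE i) : ℝ) - (u x : ℝ)| ^ p) := by
  unfold gradEnergy
  rw [ENNReal.tsum_comm, tsum_fintype]

lemma energy_refl (h : IsDir δ P α κ) (p : ℝ) (k : ℤ) (u : ZLat d → NNReal) :
    gradEnergy d p u =
      ∑ i : Fin d, ∑' x : ZLat d, ENNReal.ofReal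
        (|(u (srefl δ P k (x + latE i)) : ℝ) - (u (srefl δ P k x) : ℝ)| ^ p) := by
  obtain ⟨π, hπ⟩ := h.perm
  rw [energy_swap, ← Equiv.sum_comp π]
  refine Finset.sum_congr rfl fun i _ => ?_
  rw [← Equiv.tsum_eq (reflE h k)
    (fun x => ENNReal.ofReal (|(u (x + latE (π i)) : ℝ) - (u x : ℝ)| ^ p))]
  rcases hπ i with e | e
  · refine tsum_congr fun x => ?_
    rw [h.refl_add, e]; rfl
  · rw [Equiv.tsum_eq (reflE h k) 
      (fun x => ENNReal.ofReal (|(u (x + latE (π i)) : ℝ) - (u x : ℝ)| ^ p))]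
    rw [← Equiv.tsum_eq (Equiv.addRight (-latE (π i)))]
    rw [← Equiv.tsum_eq (reflE h k)]
    refine tsum_congr fun x => ?_
    rw [h.refl_add, e]
    simp [reflE, abs_sub_comm]

lemma pol_energy (h : IsDir δ P α κ) {p : ℝ} (hp : 1 ≤ p) (k : ℤ) (u : ZLat d → NNReal) :
    gradEnergy d p (pol δ P k u) ≤ gradEnergy d p u := by
  have key : ∀ w : ZLat d → NNReal, 2 * gradEnergy d p w =
      ∑ i : Fin d, ∑' x : ZLat d, ENNReal.ofReal
        (|(w (x + latE i) : ℝ) - (w x : ℝ)| ^ p +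
        |(w (srefl δ P k (x + latE i)) : ℝ) - (w (srefl δ P k x) : ℝ)| ^ p) := by
    intro w
    rw [two_mul]
    nth_rewrite 1 [energy_swap]
    rw [energy_refl h p k, ← Finset.sum_add_distrib]
    refine Finset.sum_congr rfl fun i _ => ?_
    rw [← ENNReal.tsum_add]
    refine tsum_congr fun x => ?_
    rw [ENNReal.ofReal_add (by positivity) (by positivity)]
  have : 2 * gradEnergy d p (pol δ P k u) ≤ 2 * gradEnergy d p u := by
    rw [key, key]
    refine Finset.sum_le_sum fun i _ => ENNReal.tsum_le_tsum fun x => ?_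
    exact ENNReal.ofReal_le_ofReal (pol_edge h hp k u x i)
  exact (ENNReal.mul_le_mul_iff_right (by simp) (by simp)).1 this

/-- The secondary weight. -/
def theta (x : ZLat d) : ℝ := phi x / (1 + phi x)

lemma theta_nonneg (x : ZLat d) : 0 ≤ theta x :=
  div_nonneg (phi_nonneg x) (by linarith [phi_nonneg x])

lemma theta_le (x : ZLat d) : theta x ≤ 1 :=
  div_le_one_of_le₀ (by linarith) (by linarith [phi_nonneg x])

lemma theta_lt {x y : ZLat d} (h : phi x < phi y) : theta x < theta y := by
  unfold theta
  have := phi_nonneg x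
  have := phi_nonneg y
  rw [div_lt_div_iff₀ (by linarith) (by linarith)]
  nlinarith

/-- The secondary functional. -/
def Jfun (p : ℝ) (u : ZLat d → NNReal) : ENNReal :=
  ∑' x : ZLat d, ENNReal.ofReal (theta x * (u x : ℝ) ^ p)

lemma J_double (h : IsDir δ P α κ) (p : ℝ) (k : ℤ) (u : ZLat d → NNReal) :
    2 * Jfun p u = ∑' x : ZLat d, ENNReal.ofReal (theta x * (u x : ℝ) ^ p +
      theta (srefl δ P k x) * (u (srefl δ P k x) : ℝ) ^ p) := by
  rw [two_mul]
  unfold Jfun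
  nth_rewrite 2 [← Equiv.tsum_eq (reflE h k)]
  rw [← ENNReal.tsum_add]
  refine tsum_congr fun x => ?_
  have := theta_nonneg x
  have := theta_nonneg (srefl δ P k x)
  rw [ENNReal.ofReal_add (by positivity) (by positivity)]
  rfl

lemma two_term {a b s t : ℝ} (hab : a ≤ b) : a * max s t + b * min s t ≤ a * s + b * t := by
  rcases le_total s t with h | h <;> simp [h]
  nlinarith

lemma two_term_lt {a b s t : ℝ} (hab : a < b) (h : s < t) :
    a * max s t + b * min s t < a * s + b * t := by
  simp [h.le]
  nlinarith

lemma max_rpow (a b : NNReal) {p : ℝ} (hp : 0 ≤ p) :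
    ((max a b : NNReal) : ℝ) ^ p = max ((a : ℝ) ^ p) ((b : ℝ) ^ p) := by
  rcases le_total a b with h | h
  · rw [max_eq_right h, max_eq_right]
    exact Real.rpow_le_rpow a.2 (by exact_mod_cast h) hp
  · rw [max_eq_left h, max_eq_left]
    exact Real.rpow_le_rpow b.2 (by exact_mod_cast h) hp

lemma min_rpow (a b : NNReal) {p : ℝ} (hp : 0 ≤ p) :
    ((min a b : NNReal) : ℝ) ^ p = min ((a : ℝ) ^ p) ((b : ℝ) ^ p) := by
  rcases le_total a b with h | h
  · rw [min_eq_left h, min_eq_left]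
    exact Real.rpow_le_rpow a.2 (by exact_mod_cast h) hp
  · rw [min_eq_right h, min_eq_right]
    exact Real.rpow_le_rpow b.2 (by exact_mod_cast h) hp

lemma pol_J_lt (h : IsDir δ P α κ) {p : ℝ} (hp : 1 ≤ p) (k : ℤ) (u : ZLat d → NNReal)
    (hpfin : Jfun p (pol δ P k u) ≠ ⊤) (x₀ : ZLat d)
    (h1 : phi x₀ < phi (srefl δ P k x₀))
    (h2 : u x₀ < u (srefl δ P k x₀)) : Jfun p (pol δ P k u) < Jfun p u := by
  have hp0 : 0 ≤ p := by linarith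
  have : 2 * Jfun p (pol δ P k u) < 2 * Jfun p u := by
    have hf2 : 2 * Jfun p (pol δ P k u) ≠ ⊤ := ENNReal.mul_ne_top (by simp) hpfin
    rw [J_double h p k] at hf2
    rw [J_double h p k, J_double h p k]
    refine ENNReal.tsum_lt_tsum (i := x₀) hf2 (fun x => ?_) ?_
    · apply ENNReal.ofReal_le_ofReal
      by_cases hx : phi x < phi (srefl δ P k x)
      · obtain ⟨e1, e2⟩ := pol_plus h k u x hx.not_gt
        rw [e1, e2, max_rpow _ _ hp0, min_rpow _ _ hp0]
        exact two_term (theta_lt hx).le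
      · by_cases hx' : phi (srefl δ P k x) < phi x
        · obtain ⟨e1, e2⟩ := pol_minus h k u x hx
          rw [e1, e2, max_rpow _ _ hp0, min_rpow _ _ hp0]
          have := two_term (theta_lt hx').le (s := (u (srefl δ P k x) : ℝ) ^ p) (t := (u x : ℝ) ^ p)
          rw [max_comm, min_comm] at this
          linarith
        · unfold pol
          simp [h.fixed k x hx hx']
    · obtain ⟨e1, e2⟩ := pol_plus h k u x₀ h1.not_gt
      rw [e1, e2, max_rpow _ _ hp0, min_rpow _ _ hp0]
      have hlt : (u x₀ : ℝ) ^ p < (u (srefl δ P k x₀) : ℝ) ^ p :=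
        Real.rpow_lt_rpow (u x₀).2 (by exact_mod_cast h2) (by linarith)
      have := two_term_lt (theta_lt h1) hlt
      rw [ENNReal.ofReal_lt_ofReal_iff_of_nonneg]
      · exact this
      · have := theta_nonneg x₀
        have := theta_nonneg (srefl δ P k x₀)
        positivity
  exact lt_of_mul_lt_mul_left' this

/-- Polarization is a composition with a permutation. -/
lemma pol_comp (h : IsDir δ P α κ) (k : ℤ) (u : ZLat d → NNReal) :
    ∃ ρ : Equiv.Perm (ZLat d), ∀ x, pol δ P k u x = u (ρ x) := by
  classical
  let c : ZLat d → Prop := fun x =>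
    (phi x < phi (srefl δ P k x) ∧ u x < u (srefl δ P k x)) ∨
    (phi (srefl δ P k x) < phi x ∧ u (srefl δ P k x) < u x)
  have hc : ∀ x, c (srefl δ P k x) ↔ c x := by
    intro x
    simp only [c, h.refl_refl]
    tauto
  let ρ : ZLat d → ZLat d := fun x => if c x then srefl δ P k x else x
  have hρ : ∀ x, ρ (ρ x) = x := by
    intro x
    by_cases hx : c x
    · simp only [ρ, hx, if_true, hc, h.refl_refl]
    · simp only [ρ, hx, if_false]
  refine ⟨⟨ρ, ρ, hρ, hρ⟩, fun x => ?_⟩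
  change _ = u (ρ x)
  by_cases h1 : phi x < phi (srefl δ P k x)
  · simp only [pol, h1, if_true, ρ, c, h1.not_gt, true_and, false_and, or_false]
    split_ifs with h2
    · exact max_eq_right h2.le
    · exact max_eq_left (not_lt.1 h2)
  · by_cases h2 : phi (srefl δ P k x) < phi x
    · simp only [pol, h1, if_false, ρ, c, h2, true_and, false_and, false_or]
      split_ifs with h3
      · exact min_eq_right h3.le
      · exact min_eq_left (not_lt.1 h3)
    · simp only [pol, h1, if_false, ρ, c, h2, false_and, false_or]
      simp [h.fixed k x h1 h2]

lemma pol_tight (k : ℤ) (u : ZLat d → NNReal) {t : NNReal} {r : ℝ}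
    (hu : ∀ x, t < u x → phi x ≤ r) (x : ZLat d) (hx : t < pol δ P k u x) : phi x ≤ r := by
  unfold pol at hx
  split_ifs at hx with h1
  · rcases lt_max_iff.1 hx with h2 | h2
    · exact hu _ h2
    · exact h1.le.trans (hu _ h2)
  · exact hu _ (lt_min_iff.1 hx).1

end pol

/-! ### The directions -/

section dirs
variable {d : ℕ}

lemma sum_latE (i : Fin d) (f : Fin d → ℝ) : ∑ l, ((latE i l : ℤ) : ℝ) * f l = f i := by
  simp [latE]

lemma phi_add (x δ : ZLat d) (m : ℤ) :
    phi (x + m • δ) = phi x + (2 * m * (∑ l, (δ l : ℝ) * ((x l : ℝ) - refA d l)) +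
      (m : ℝ) ^ 2 * ∑ l, (δ l : ℝ) * (δ l : ℝ)) := by
  unfold phi
  rw [Finset.mul_sum, Finset.mul_sum, ← Finset.sum_add_distrib, ← Finset.sum_add_distrib]
  refine Finset.sum_congr rfl fun l _ => ?_
  simp only [Pi.add_apply, Pi.smul_apply, smul_eq_mul]
  push_cast
  ring

lemma latE_self (i : Fin d) : (latE i i : ℤ) = 1 := by simp [latE]

lemma latE_ne {i j : Fin d} (h : j ≠ i) : (latE i j : ℤ) = 0 := by simp [latE, h]

lemma isDir_axis (i : Fin d) :
    IsDir (latE i) (fun x : ZLat d => 2 * x i) (2 * refA d i) 1 where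
  add x y := by simp [mul_add]
  two := by simp [latE_self]
  apos := by linarith [refA_pos d i]
  alt := by linarith [refA_lt d i]
  kpos := one_pos
  hphi x m := by
    rw [phi_add, sum_latE, sum_latE, latE_self]
    push_cast
    ring
  perm := by
    refine ⟨1, fun j => ?_⟩
    by_cases h : i = j
    · subst h
      right
      ext l
      simp [latE_self]
      ring
    · left
      ext l
      simp [latE_ne h]
  cross j := by
    by_cases h : i = j
    · subst h
      simp [latE_self]
    · simp [latE_ne h]

lemma isDir_diag {i j : Fin d} (hij : i < j) (s : ℤ) (hs : s = 1 ∨ s = -1) :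
    IsDir (latE i + s • latE j) (fun x : ZLat d => x i + s * x j) (refA d i + s * refA d j) 2 where
  add x y := by simp; ring
  two := by
    rcases hs with rfl | rfl <;> simp [latE_self, latE_ne hij.ne, latE_ne hij.ne']
  apos := by
    have := refA_anti d hij
    have := refA_pos d i
    have := refA_pos d j
    rcases hs with rfl | rfl <;> push_cast <;> linarith
  alt := by
    have := refA_lt d j
    have := refA_lt d i
    have := refA_pos d j
    rcases hs with rfl | rfl <;> push_cast <;> linarith
  kpos := two_pos
  hphi x m := by
    have key : ∀ f : Fin d → ℝ, ∑ l, (((latE i + s • latE j : ZLat d) l : ℤ) : ℝ) * f l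
        = f i + s * f j := by
      intro f
      rw [← sum_latE i f, ← sum_latE j f, Finset.mul_sum, ← Finset.sum_add_distrib]
      refine Finset.sum_congr rfl fun l _ => ?_
      simp only [Pi.add_apply, Pi.smul_apply, smul_eq_mul]
      push_cast
      ring
    rw [phi_add, key, key]
    simp only [Pi.add_apply, Pi.smul_apply, smul_eq_mul, latE_self, latE_ne hij.ne, latE_ne hij.ne']
    rcases hs with rfl | rfl <;> push_cast <;> ring
  perm := by
    refine ⟨Equiv.swap i j, fun l => ?_⟩
    by_cases h : l = i
    · subst h
      rw [Equiv.swap_apply_left]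
      simp only [latE_self, latE_ne hij.ne']
      rcases hs with rfl | rfl
      · right; ext a; simp
      · left; ext a; simp
    · by_cases h' : l = j
      · subst h'
        rw [Equiv.swap_apply_right]
        simp only [latE_self, latE_ne hij.ne]
        rcases hs with rfl | rfl
        · right; ext a; simp
        · left; ext a; simp
      · left
        rw [Equiv.swap_apply_of_ne_of_ne h h']
        simp [latE_ne (Ne.symm h), latE_ne (Ne.symm h')]
  cross l := by
    by_cases h : l = i
    · subst h
      simp [latE_self, latE_ne hij.ne']
    · by_cases h' : l = j
      · subst h'
        rcases hs with rfl | rfl <;> simp [latE_self, latE_ne hij.ne]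
      · simp [latE_ne (Ne.symm h), latE_ne (Ne.symm h')]

/-- Fully polarized functions. -/
def FullPol (v : ZLat d → NNReal) : Prop :=
  ∀ (δ : ZLat d) (P : ZLat d → ℤ) (α κ : ℝ), IsDir δ P α κ → ∀ (k : ℤ) (x : ZLat d),
    phi x < phi (srefl δ P k x) → v (srefl δ P k x) ≤ v x

/-- On a line, a fully polarized function decreases with `phi`. -/
lemma FullPol.line {v : ZLat d → NNReal} (hv : FullPol v) {δ : ZLat d} {P : ZLat d → ℤ} {α κ : ℝ}
    (h : IsDir δ P α κ) (x : ZLat d) (m : ℤ) (hm : phi x < phi (x + m • δ)) :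
    v (x + m • δ) ≤ v x := by
  have e : srefl δ P (P x + m) x = x + m • δ := by
    unfold srefl; simp
  have := hv δ P α κ h (P x + m) x
  rw [e] at this
  exact this hm

lemma FullPol.line' {v : ZLat d → NNReal} (hv : FullPol v) {δ : ZLat d} {P : ZLat d → ℤ} {α κ : ℝ}
    (h : IsDir δ P α κ) (x : ZLat d) (m : ℤ) (hm : phi (x + m • δ) < phi x) :
    v x ≤ v (x + m • δ) := by
  have := hv.line h (x + m • δ) (-m)
  simp only [neg_smul, add_neg_cancel_right] at this
  exact this hm

lemma posIdx_phi {δ : ZLat d} {P : ZLat d → ℤ} {α κ : ℝ}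
    (h : IsDir δ P α κ) (x : ZLat d) (m : ℤ) (hlt : posIdx (P x + 2 * m) < posIdx (P x)) :
    phi (x + m • δ) < phi x := by
  rw [h.hphi]
  have h0 := h.apos
  have h1 := h.alt
  have hk := h.kpos
  have key : ((0 < m ∧ P x + m ≤ 0) ∨ (m < 0 ∧ 1 ≤ P x + m)) := by
    unfold posIdx at hlt
    split_ifs at hlt <;> omega
  have : (m : ℝ) * ((P x : ℝ) - α + m) < 0 := by
    rcases key with ⟨a, b⟩ | ⟨a, b⟩
    · have a' : (0 : ℝ) < m := by exact_mod_cast a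
      have b' : (P x : ℝ) + m ≤ 0 := by exact_mod_cast b
      exact mul_neg_of_pos_of_neg a' (by linarith)
    · have a' : (m : ℝ) < 0 := by exact_mod_cast a
      have b' : (1 : ℝ) ≤ (P x : ℝ) + m := by exact_mod_cast b
      exact mul_neg_of_neg_of_pos a' (by linarith)
  nlinarith

lemma posIdx_surj (c : ℤ) (n : ℕ) (hn : 1 ≤ n) : ∃ m : ℤ, posIdx (c + 2 * m) = n := by
  unfold posIdx
  by_cases h : (c - n) % 2 = 0
  · refine ⟨(n - c) / 2, ?_⟩
    have : c + 2 * ((n - c) / 2) = n := by omega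
    rw [this, if_pos (by omega)]
    simp
  · refine ⟨(1 - n - c) / 2, ?_⟩
    have : c + 2 * ((1 - n - c) / 2) = 1 - n := by omega
    rw [this, if_neg (by omega)]
    omega

lemma posIdx_inj (a b : ℤ) (hp : (a - b) % 2 = 0) (h : posIdx a = posIdx b) : a = b := by
  unfold posIdx at h
  split_ifs at h <;> omega

lemma posIdx_pos (a : ℤ) : 1 ≤ posIdx a := by
  unfold posIdx
  split_ifs <;> omega

lemma stepR_fixed {v : ZLat d → NNReal} (hv : FullPol v) {δ : ZLat d} {P : ZLat d → ℤ} {α κ : ℝ}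
    (h : IsDir δ P α κ) (e : Fin d → ℝ) (hpair : ∀ x, pairing e x = P x)
    (hline : ∀ x y, sameLine e x y ↔ ∃ m : ℤ, y = x + m • δ) : stepR e v = v := by
  classical
  funext x
  unfold stepR nthLargest
  rw [hpair]
  have hP : ∀ m : ℤ, P (x + m • δ) = P x + 2 * m := by
    intro m; rw [h.add, h.smul, h.two]; ring
  have anti : ∀ m : ℤ, posIdx (P x + 2 * m) ≤ posIdx (P x) → v x ≤ v (x + m • δ) := by
    intro m hm
    rcases hm.lt_or_eq with h1 | h1
    · exact hv.line' h x m (posIdx_phi h x m h1)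
    · have := posIdx_inj _ _ (by omega) h1
      have : m = 0 := by omega
      subst this; simp
  have anti' : ∀ m : ℤ, posIdx (P x) ≤ posIdx (P x + 2 * m) → v (x + m • δ) ≤ v x := by
    intro m hm
    rcases hm.lt_or_eq with h1 | h1
    · apply hv.line h x m
      have := posIdx_phi h (x + m • δ) (-m)
      rw [hP] at this
      simp only [neg_smul, add_neg_cancel_right] at this
      apply this
      have e : P x + 2 * m + 2 * -m = P x := by ring
      rwa [e]
    · have := posIdx_inj _ _ (by omega) h1
      have : m = 0 := by omega
      subst this; simp
  apply IsGreatest.csSup_eq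
  constructor
  · have hs : ∀ k : Fin (posIdx (P x)), ∃ m : ℤ, posIdx (P x + 2 * m) = (k : ℕ) + 1 :=
      fun k => posIdx_surj _ _ (by omega)
    choose g hg using hs
    let f : Fin (posIdx (P x)) → {y : ZLat d // sameLine e x y} :=
      fun k => ⟨x + g k • δ, (hline _ _).2 ⟨g k, rfl⟩⟩
    have hf : Function.Injective f := by
      intro a b hab
      have h1 : x + g a • δ = x + g b • δ := congrArg Subtype.val hab
      have h2 := congrArg P h1
      rw [hP, hP] at h2
      have h3 := hg a
      rw [h2, hg b] at h3
      exact Fin.ext (by omega)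
    refine ⟨Finset.univ.map ⟨f, hf⟩, by simp, ?_⟩
    intro y hy
    obtain ⟨k, -, rfl⟩ := Finset.mem_map.1 hy
    apply anti
    rw [hg]
    exact k.2
  · rintro t ⟨Ω, hcard, hΩ⟩
    have : ∃ y ∈ Ω, posIdx (P x) ≤ posIdx (P y.1) := by
      by_contra hcon
      push Not at hcon
      have hle : Ω.card ≤ (Finset.Ico 1 (posIdx (P x))).card := by
        apply Finset.card_le_card_of_injOn (fun y => posIdx (P y.1))
        · intro y hy
          simp only [Finset.coe_Ico, Set.mem_Ico]
          exact ⟨posIdx_pos _, hcon y hy⟩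
        · rintro ⟨a, ha⟩ _ ⟨b, hb⟩ _ hab
          obtain ⟨m, rfl⟩ := (hline _ _).1 ha
          obtain ⟨n, rfl⟩ := (hline _ _).1 hb
          simp only [hP] at hab
          have := posIdx_inj _ _ (by omega) hab
          have : m = n := by omega
          subst this; rfl
      rw [Nat.card_Ico, hcard] at hle
      have := posIdx_pos (P x)
      omega
    obtain ⟨⟨y, hy⟩, hyΩ, hle⟩ := this
    obtain ⟨m, rfl⟩ := (hline _ _).1 hy
    refine (hΩ _ hyΩ).trans (anti' m ?_)
    rw [← hP]; exact hle

lemma stepR_axis {v : ZLat d → NNReal} (hv : FullPol v) (i : Fin d) :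
    stepR (stdVec d i) v = v := by
  apply stepR_fixed hv (isDir_axis i)
  · intro x
    unfold pairing
    simp only [stdVec, ite_mul, one_mul, zero_mul, Finset.sum_ite_eq', Finset.mem_univ, if_true]
    rw [← Int.floor_intCast (R := ℝ) (2 * x i)]
    push_cast
    rfl
  · intro x y
    constructor
    · rintro ⟨c, hc⟩
      refine ⟨y i - x i, ?_⟩
      ext l
      by_cases h : l = i
      · subst h
        simp [latE_self]
      · have := congrFun hc l
        simp [stdVec, h] at this
        have : (x l : ℝ) = y l := by linarith
        simp [latE_ne h]
        exact_mod_cast this.symm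
    · rintro ⟨m, rfl⟩
      refine ⟨-m, ?_⟩
      ext l
      by_cases h : l = i <;> simp [stdVec, latE, h]

lemma stepR_diag {v : ZLat d → NNReal} (hv : FullPol v) {i j : Fin d} (hij : i < j)
    (s : ℤ) (hs : s = 1 ∨ s = -1) :
    stepR (fun k => (stdVec d i k + s * stdVec d j k) / 2) v = v := by
  have hs2 : (s : ℝ) * s = 1 := by rcases hs with rfl | rfl <;> norm_num
  apply stepR_fixed hv (isDir_diag hij s hs)
  · intro x
    unfold pairing
    rw [← Int.floor_intCast (R := ℝ) (x i + s * x j)]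
    congr 1
    have e : ∀ k, (stdVec d i k + s * stdVec d j k) / 2 * (x k : ℝ) =
      (stdVec d i k * x k) / 2 + s * (stdVec d j k * x k) / 2 := by intro k; ring
    simp only [e, Finset.sum_add_distrib, ← Finset.sum_div, ← Finset.mul_sum]
    simp only [stdVec, ite_mul, one_mul, zero_mul, Finset.sum_ite_eq', Finset.mem_univ, if_true]
    push_cast
    ring
  · intro x y
    constructor
    · rintro ⟨c, hc⟩
      refine ⟨y i - x i, ?_⟩
      have hi := congrFun hc i
      simp [stdVec, hij.ne] at hi
      ext l
      by_cases h : l = i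
      · subst h
        simp [latE_self, latE_ne hij.ne]
      · have hl := congrFun hc l
        by_cases h' : l = j
        · subst h'
          simp [stdVec, hij.ne'] at hl
          simp [latE_self, latE_ne hij.ne']
          have : (y l : ℝ) = x l + (y i - x i) * s := by
            have : (y i : ℝ) - x i = - (c * 2⁻¹) := by linarith
            rw [this]
            linarith
          exact_mod_cast this
        · simp [stdVec, h, h'] at hl
          have : (x l : ℝ) = y l := by linarith
          simp [latE_ne h, latE_ne h']
          exact_mod_cast this.symm
    · rintro ⟨m, rfl⟩
      refine ⟨-2 * m, ?_⟩
      ext l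
      simp only [stdVec, latE, Pi.add_apply, Pi.smul_apply, smul_eq_mul]
      push_cast
      ring

lemma RZd_fixed (hd : 2 ≤ d) {v : ZLat d → NNReal} (hv : FullPol v) : RZd d v = v := by
  have hmem : ∀ e ∈ EvecList d, stepR e v = v := by
    intro e he
    unfold EvecList at he
    simp only [List.mem_append, List.mem_map, List.mem_flatMap, List.mem_filterMap,
      List.mem_finRange, true_and] at he
    rcases he with (⟨i, rfl⟩ | ⟨i, j, h⟩) | ⟨i, j, h⟩
    · exact stepR_axis hv i
    · split_ifs at h with hij
      obtain rfl := Option.some.inj h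
      have := stepR_diag hv hij 1 (Or.inl rfl)
      simpa using this
    · split_ifs at h with hij
      obtain rfl := Option.some.inj h
      have := stepR_diag hv hij (-1) (Or.inr rfl)
      simpa [← sub_eq_add_neg] using this
  have hlen : 0 < (EvecList d).length := by
    unfold EvecList
    simp
    omega
  have hit : ∀ k, iterR d v k = v := by
    intro k
    induction k with
    | zero => rfl
    | succ k ih =>
      rw [iterR, ih]
      apply hmem
      rw [List.getD_eq_getElem _ _ (Nat.mod_lt _ hlen)]
      exact List.getElem_mem _
  funext x
  unfold RZd
  simp only [hit]
  exact tendsto_const_nhds.limUnder_eq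

end dirs

/-! ### Compactness -/

section compactness
variable {d : ℕ}

lemma phi_finite (r : ℝ) : {x : ZLat d | phi x ≤ r}.Finite := by
  obtain ⟨N, hN⟩ := exists_nat_gt (r + 2)
  refine (Set.finite_Icc (fun _ => -(N : ℤ)) (fun _ => (N : ℤ))).subset ?_
  intro x hx
  have hx : phi x ≤ r := hx
  have key : ∀ i, ((x i : ℝ) - refA d i) ^ 2 ≤ r := by
    intro i
    refine le_trans ?_ hx
    exact Finset.single_le_sum (f := fun i => ((x i : ℝ) - refA d i) ^ 2)
      (fun _ _ => sq_nonneg _) (Finset.mem_univ i)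
  constructor
  · intro i
    have h1 := key i
    have h2 := refA_pos d i
    have h3 := refA_lt d i
    have : (-(N : ℝ)) ≤ x i := by nlinarith
    exact_mod_cast this
  · intro i
    have h1 := key i
    have h2 := refA_pos d i
    have h3 := refA_lt d i
    have : (x i : ℝ) ≤ N := by nlinarith
    exact_mod_cast this

/-- The compact classes. -/
def Cset (u : ZLat d → NNReal) (r : NNReal → ℝ) : Set (ZLat d → NNReal) :=
  {w | ∀ t : NNReal, 0 < t →
    (∀ x, phi x ≤ r t ∨ w x ≤ t) ∧
    (∀ F : Finset (ZLat d), (∃ G : Finset (ZLat d), G.card = F.card ∧ ∀ x ∈ G, t < u x) ∨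
      ∃ x ∈ F, w x ≤ t) ∧
    (∀ G : Finset (ZLat d), (∀ x ∈ G, t < u x) →
      ∃ F ∈ (phi_finite (d := d) (r t)).toFinset.powerset, F.card = G.card ∧ ∀ x ∈ F, t ≤ w x)}

lemma equi_image {u w : ZLat d → NNReal} {t : NNReal}
    (h : Nonempty ({x | t < u x} ≃ {x | t < w x}))
    (F : Finset (ZLat d)) (hF : ∀ x ∈ F, t < u x) :
    ∃ G : Finset (ZLat d), G.card = F.card ∧ ∀ x ∈ G, t < w x := by
  classical
  obtain ⟨e⟩ := h
  let f : {x // x ∈ F} → ZLat d := fun x => (e ⟨x.1, hF x.1 x.2⟩).1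
  have hf : Function.Injective f := by
    intro a b hab
    have h1 := e.injective (Subtype.ext hab)
    exact Subtype.ext (congrArg (fun z : {x | t < u x} => z.1) h1)
  refine ⟨F.attach.map ⟨f, hf⟩, by simp, ?_⟩
  intro x hx
  obtain ⟨a, -, rfl⟩ := Finset.mem_map.1 hx
  exact (e ⟨a.1, hF a.1 a.2⟩).2

lemma mem_Cset {u : ZLat d → NNReal} (hu : Admissible u) {r : NNReal → ℝ} {w : ZLat d → NNReal} :
    w ∈ Cset u r ↔ Equimeasurable u w ∧ ∀ t : NNReal, 0 < t → ∀ x, t < w x → phi x ≤ r t := by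
  classical
  constructor
  · intro hw
    have tight : ∀ t : NNReal, 0 < t → ∀ x, t < w x → phi x ≤ r t := by
      intro t ht x hx
      rcases (hw t ht).1 x with h | h
      · exact h
      · exact absurd hx (not_lt.2 h)
    refine ⟨fun t ht => ?_, tight⟩
    have hfu := hu t ht
    have hfw : {x | t < w x}.Finite := (phi_finite (r t)).subset fun x hx => tight t ht x hx
    have hle : hfw.toFinset.card ≤ hfu.toFinset.card := by
      rcases (hw t ht).2.1 hfw.toFinset with ⟨G, hG, hG2⟩ | ⟨x, hx, hx2⟩
      · rw [← hG]
        exact Finset.card_le_card fun x hx => hfu.mem_toFinset.2 (hG2 x hx)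
      · exact absurd (hfw.mem_toFinset.1 hx) (not_lt.2 hx2)
    have hge : hfu.toFinset.card ≤ hfw.toFinset.card := by
      obtain ⟨s, hts, hs⟩ : ∃ s : NNReal, t < s ∧ ∀ x ∈ hfu.toFinset, s < u x := by
        by_cases hne : hfu.toFinset.Nonempty
        · obtain ⟨x0, hx0, hmin⟩ := Finset.exists_min_image hfu.toFinset u hne
          obtain ⟨s, h1, h2⟩ := exists_between (show t < u x0 from hfu.mem_toFinset.1 hx0)
          exact ⟨s, h1, fun x hx => h2.trans_le (hmin x hx)⟩
        · rw [Finset.not_nonempty_iff_eq_empty] at hne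
          refine ⟨t + 1, by simp, ?_⟩
          simp [hne]
      obtain ⟨F, -, hFc, hF⟩ := (hw s (ht.trans hts)).2.2 hfu.toFinset hs
      rw [← hFc]
      exact Finset.card_le_card fun x hx => hfw.mem_toFinset.2 (hts.trans_le (hF x hx))
    have := hfu.to_subtype
    have := hfw.to_subtype
    refine (Finite.card_eq).1 ?_
    rw [Nat.card_coe_set_eq, Nat.card_coe_set_eq, Set.ncard_eq_toFinset_card _ hfu,
      Set.ncard_eq_toFinset_card _ hfw]
    omega
  · rintro ⟨he, ht⟩ t ht0
    refine ⟨fun x => ?_, fun F => ?_, fun G hG => ?_⟩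
    · by_cases h : t < w x
      · exact Or.inl (ht t ht0 x h)
      · exact Or.inr (not_lt.1 h)
    · by_cases h : ∀ x ∈ F, t < w x
      · exact Or.inl (equi_image ((he t ht0).map Equiv.symm) F h)
      · push Not at h
        exact Or.inr h
    · obtain ⟨F, h1, h2⟩ := equi_image (he t ht0) G hG
      refine ⟨F, ?_, h1, fun x hx => (h2 x hx).le⟩
      rw [Finset.mem_powerset]
      intro x hx
      rw [Set.Finite.mem_toFinset]
      exact ht t ht0 x (h2 x hx)

lemma isCompact_Cset {u : ZLat d → NNReal} (hu : Admissible u) (r : NNReal → ℝ) :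
    IsCompact (Cset u r) := by
  classical
  obtain ⟨M, hM0, hM⟩ : ∃ M : NNReal, 0 < M ∧ ∀ x, u x ≤ M := by
    have hf := hu 1 one_pos
    refine ⟨1 + ∑ x ∈ hf.toFinset, u x, by positivity, fun x => ?_⟩
    by_cases hx : 1 < u x
    · refine le_trans ?_ le_add_self
      exact Finset.single_le_sum (f := u) (fun _ _ => zero_le) (hf.mem_toFinset.2 hx)
    · exact (not_lt.1 hx).trans le_self_add
  have hK : IsCompact (Set.univ.pi fun _ : ZLat d => Set.Icc (0 : NNReal) M) :=
    isCompact_univ_pi fun _ => isCompact_Icc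
  refine hK.of_isClosed_subset ?_ ?_
  · unfold Cset
    simp only [Set.ofPred_forall, Set.ofPred_and]
    refine isClosed_iInter fun t => isClosed_iInter fun ht => IsClosed.inter ?_ (IsClosed.inter ?_ ?_)
    · refine isClosed_iInter fun x => ?_
      simp only [Set.ofPred_or]
      exact isClosed_const.union (isClosed_le (continuous_apply x) continuous_const)
    · refine isClosed_iInter fun F => ?_
      simp only [Set.ofPred_or]
      refine isClosed_const.union ?_
      have : {w : ZLat d → NNReal | ∃ x ∈ F, w x ≤ t} = ⋃ x ∈ F, {w | w x ≤ t} := by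
        ext w; simp
      rw [this]
      exact F.finite_toSet.isClosed_biUnion fun x _ =>
        isClosed_le (continuous_apply x) continuous_const
    · refine isClosed_iInter fun G => isClosed_iInter fun hG => ?_
      have : {w : ZLat d → NNReal | ∃ F ∈ (phi_finite (d := d) (r t)).toFinset.powerset,
          F.card = G.card ∧ ∀ x ∈ F, t ≤ w x} =
          ⋃ F ∈ (phi_finite (d := d) (r t)).toFinset.powerset,
            {w | F.card = G.card ∧ ∀ x ∈ F, t ≤ w x} := by
        ext w; simp only [Set.mem_iUnion, exists_prop]; rfl
      rw [this]
      refine (Finset.finite_toSet _).isClosed_biUnion fun F _ => ?_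
      simp only [Set.ofPred_forall, Set.ofPred_and]
      refine isClosed_const.inter ?_
      exact isClosed_iInter fun x => isClosed_iInter fun _ =>
        isClosed_le continuous_const (continuous_apply x)
  · intro w hw x _
    refine ⟨zero_le, ?_⟩
    rcases (hw M hM0).2.1 {x} with ⟨G, hG, hG2⟩ | ⟨y, hy, hy2⟩
    · have : G.Nonempty := by
        rw [← Finset.card_pos, hG]; simp
      obtain ⟨y, hy⟩ := this
      exact absurd (hG2 y hy) (not_lt.2 (hM y))
    · rw [Finset.mem_singleton] at hy
      subst hy; exact hy2

lemma lsc_energy {p : ℝ} (hp : 1 ≤ p) : LowerSemicontinuous (gradEnergy d p) := by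
  have : gradEnergy d p = fun u => ∑' (x : ZLat d), ∑' (i : Fin d),
      ENNReal.ofReal (|(u (x + latE i) : ℝ) - (u x : ℝ)| ^ p) := rfl
  rw [this]
  refine lowerSemicontinuous_tsum fun x => lowerSemicontinuous_tsum fun i => ?_
  apply Continuous.lowerSemicontinuous
  apply ENNReal.continuous_ofReal.comp
  apply Continuous.rpow_const
  · fun_prop
  · intro _; right; linarith

lemma lsc_J {p : ℝ} (hp : 1 ≤ p) : LowerSemicontinuous (Jfun (d := d) p) := by
  have : Jfun (d := d) p = fun u => ∑' (x : ZLat d),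
      ENNReal.ofReal (theta x * (u x : ℝ) ^ p) := rfl
  rw [this]
  refine lowerSemicontinuous_tsum fun x => ?_
  apply Continuous.lowerSemicontinuous
  apply ENNReal.continuous_ofReal.comp
  apply continuous_const.mul
  apply Continuous.rpow_const
  · fun_prop
  · intro _; right; linarith

lemma tsum_ofReal_rpow {p : ℝ} (hp : 1 ≤ p) (u : ZLat d → NNReal) :
    ∑' x, ENNReal.ofReal ((u x : ℝ) ^ p) = ∑' x, (u x : ENNReal) ^ p := by
  refine tsum_congr fun x => ?_
  rw [← ENNReal.ofReal_rpow_of_nonneg (NNReal.coe_nonneg (u x)) (by linarith)]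
  congr 1
  exact ENNReal.ofReal_coe_nnreal

lemma equi_tsum {p : ℝ} (hp : 1 ≤ p) {u w : ZLat d → NNReal} (h : Equimeasurable u w) :
    ∑' x, ENNReal.ofReal ((w x : ℝ) ^ p) = ∑' x, ENNReal.ofReal ((u x : ℝ) ^ p) := by
  let _ : MeasurableSpace (ZLat d) := ⊤
  have hp0 : 0 < p := by linarith
  have key : ∀ v : ZLat d → NNReal, ∑' x, ENNReal.ofReal ((v x : ℝ) ^ p) =
      ENNReal.ofReal p * ∫⁻ t in Set.Ioi (0 : ℝ),
        (MeasureTheory.Measure.count {a : ZLat d | t < (v a : ℝ)}) * ENNReal.ofReal (t ^ (p - 1)) := by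
    intro v
    have := MeasureTheory.lintegral_rpow_eq_lintegral_meas_lt_mul
      (MeasureTheory.Measure.count (α := ZLat d)) (f := fun x => (v x : ℝ))
      (Eventually.of_forall fun x => (v x).2) (measurable_from_top.aemeasurable) hp0
    rw [← this, MeasureTheory.lintegral_count]
  rw [key, key]
  congr 1
  refine MeasureTheory.setLIntegral_congr_fun measurableSet_Ioi fun t ht => ?_
  have ht : 0 < t := ht
  obtain ⟨e⟩ := h ⟨t, ht.le⟩ (by exact_mod_cast ht)
  have e1 : ∀ v : ZLat d → NNReal, {a : ZLat d | t < (v a : ℝ)} = {a | (⟨t, ht.le⟩ : NNReal) < v a} := by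
    intro v; ext a
    exact ⟨fun h => h, fun h => h⟩
  rw [e1, e1, MeasureTheory.Measure.count_apply MeasurableSpace.measurableSet_top, MeasureTheory.Measure.count_apply MeasurableSpace.measurableSet_top]
  congr 2
  exact Set.encard_congr e.symm

lemma J_fin {p : ℝ} (hp : 1 ≤ p) {u w : ZLat d → NNReal}
    (hu : (∑' x : ZLat d, (u x : ENNReal) ^ p) < ⊤) (h : Equimeasurable u w) : Jfun p w ≠ ⊤ := by
  rw [← tsum_ofReal_rpow hp, ← equi_tsum hp h] at hu
  refine ne_top_of_le_ne_top hu.ne ?_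
  refine ENNReal.tsum_le_tsum fun x => ENNReal.ofReal_le_ofReal ?_
  exact mul_le_of_le_one_left (by positivity) (theta_le x)

lemma adm {p : ℝ} (hp : 1 ≤ p) {u : ZLat d → NNReal}
    (hu : (∑' x : ZLat d, (u x : ENNReal) ^ p) < ⊤) : Admissible u := by
  intro t ht
  have h0 : (t : ENNReal) ^ p ≠ 0 := by
    have : (0 : ENNReal) < t := by exact_mod_cast ht
    exact (ENNReal.rpow_pos this (by simp)).ne'
  refine (ENNReal.finite_const_le_of_tsum_ne_top hu.ne h0).subset ?_
  intro x hx
  have hx : t < u x := hx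
  exact ENNReal.rpow_le_rpow (by exact_mod_cast hx.le) (by linarith)

lemma pol_mem {u w : ZLat d → NNReal} (hu : Admissible u) {r : NNReal → ℝ} (hw : w ∈ Cset u r)
    {δ : ZLat d} {P : ZLat d → ℤ} {α κ : ℝ} (h : IsDir δ P α κ) (k : ℤ) :
    pol δ P k w ∈ Cset u r := by
  rw [mem_Cset hu] at hw ⊢
  refine ⟨fun t ht => ?_, fun t ht x hx => pol_tight k w (hw.2 t ht) x hx⟩
  obtain ⟨e⟩ := hw.1 t ht
  obtain ⟨ρ, hρ⟩ := pol_comp h k w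
  refine ⟨e.trans (ρ.subtypeEquiv fun x => ?_).symm⟩
  change t < pol δ P k w x ↔ t < w (ρ x)
  rw [hρ]

lemma exists_fullPol {p : ℝ} (hp : 1 ≤ p) {u w : ZLat d → NNReal}
    (hu : (∑' x : ZLat d, (u x : ENNReal) ^ p) < ⊤) {r : NNReal → ℝ} (hw : w ∈ Cset u r) :
    ∃ w' ∈ Cset u r, FullPol w' ∧ gradEnergy d p w' ≤ gradEnergy d p w := by
  have ha := adm hp hu
  have hcl : IsClosed (gradEnergy d p ⁻¹' Set.Iic (gradEnergy d p w)) :=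
    (lsc_energy hp).isClosed_preimage _
  have hcomp := (isCompact_Cset ha r).inter_right hcl
  obtain ⟨v, ⟨hv1, hv2⟩, hv⟩ := LowerSemicontinuousOn.exists_isMinOn
    (show (Cset u r ∩ gradEnergy d p ⁻¹' Set.Iic (gradEnergy d p w)).Nonempty from
      ⟨w, hw, le_refl (gradEnergy d p w)⟩) hcomp ((lsc_J hp).lowerSemicontinuousOn _)
  refine ⟨v, hv1, ?_, hv2⟩
  intro δ P α κ h k x hx
  by_contra hcon
  have hmem := pol_mem ha hv1 h k
  have hlt := pol_J_lt h hp k v (J_fin hp hu ((mem_Cset ha).1 hmem).1) x hx (not_le.1 hcon)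
  have hE : gradEnergy d p (pol δ P k v) ≤ gradEnergy d p w := (pol_energy h hp k v).trans hv2
  exact absurd (hv ⟨hmem, hE⟩) (not_le.2 hlt)

lemma fullPol_tight {u w : ZLat d → NNReal} (hu : Admissible u) (he : Equimeasurable u w)
    (hw : FullPol w) : w ∈ Cset u (fun t => d * ((Nat.card {x | t < u x} : ℝ) + 1) ^ 2) := by
  classical
  rw [mem_Cset hu]
  refine ⟨he, fun t ht x hx => ?_⟩
  have hfu := hu t ht
  have hle : ∀ F : Finset (ZLat d), (∀ y ∈ F, t < w y) → F.card ≤ Nat.card {x | t < u x} := by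
    intro F hF
    obtain ⟨G, h1, h2⟩ := equi_image ((he t ht).map Equiv.symm) F hF
    rw [Nat.card_coe_set_eq, Set.ncard_eq_toFinset_card _ hfu, ← h1]
    exact Finset.card_le_card fun x hx => hfu.mem_toFinset.2 (h2 x hx)
  generalize Nat.card {x | t < u x} = N at hle
  have hinj : ∀ i : Fin d, Function.Injective (fun m : ℤ => x + m • (latE i : ZLat d)) := by
    intro i a b hab
    have := congrFun hab i
    simpa [latE_self] using this
  have key : ∀ i, ((x i : ℝ) - refA d i) ^ 2 ≤ ((N : ℝ) + 1) ^ 2 := by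
    intro i
    have hA := isDir_axis i
    have habs : |x i| ≤ N := by
      rcases le_or_gt 0 (x i) with h0 | h0
      · have := hle ((Finset.Icc (-(x i)) 0).map ⟨_, hinj i⟩) ?_
        · rw [Finset.card_map, Int.card_Icc] at this
          rw [abs_of_nonneg h0]; omega
        · intro y hy
          obtain ⟨m, hm, rfl⟩ := Finset.mem_map.1 hy
          rw [Finset.mem_Icc] at hm
          change t < w (x + m • latE i)
          by_cases hm0 : m = 0
          · subst hm0; simpa using hx
          refine hx.trans_le (hw.line' hA x m ?_)
          rw [hA.hphi]
          have h1 : (m : ℝ) ≤ -1 := by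
            have : m ≤ -1 := by omega
            exact_mod_cast this
          have h2 : (1 : ℝ) ≤ x i := by
            have : 1 ≤ x i := by omega
            exact_mod_cast this
          have h3 : -(x i : ℝ) ≤ m := by exact_mod_cast hm.1
          have h4 := refA_lt d i
          have : (m : ℝ) * (((2 * x i : ℤ) : ℝ) - 2 * refA d i + m) < 0 := by
            apply mul_neg_of_neg_of_pos (by linarith)
            push_cast; linarith
          linarith
      · have := hle ((Finset.Icc 0 (-(x i))).map ⟨_, hinj i⟩) ?_
        · rw [Finset.card_map, Int.card_Icc] at this
          rw [abs_of_neg h0]; omega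
        · intro y hy
          obtain ⟨m, hm, rfl⟩ := Finset.mem_map.1 hy
          rw [Finset.mem_Icc] at hm
          change t < w (x + m • latE i)
          by_cases hm0 : m = 0
          · subst hm0; simpa using hx
          refine hx.trans_le (hw.line' hA x m ?_)
          rw [hA.hphi]
          have h1 : (1 : ℝ) ≤ m := by
            have : 1 ≤ m := by omega
            exact_mod_cast this
          have h2 : (x i : ℝ) < 0 := by exact_mod_cast h0
          have h3 : (m : ℝ) ≤ -(x i : ℝ) := by exact_mod_cast hm.2
          have h4 := refA_pos d i
          have : (m : ℝ) * (((2 * x i : ℤ) : ℝ) - 2 * refA d i + m) < 0 := by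
            apply mul_neg_of_pos_of_neg (by linarith)
            push_cast; linarith
          linarith
    have h1 : |(x i : ℝ)| ≤ N := by exact_mod_cast habs
    have h2 := refA_pos d i
    have h3 := refA_lt d i
    rw [abs_le] at h1
    apply sq_le_sq'
    · linarith [h1.1]
    · linarith [h1.2]
  calc phi x ≤ ∑ _i : Fin d, ((N : ℝ) + 1) ^ 2 := Finset.sum_le_sum fun i _ => key i
    _ = _ := by simp

lemma mem_some {u w : ZLat d → NNReal} (hu : Admissible u) (he : Equimeasurable u w) :
    ∃ r, w ∈ Cset u r := by
  classical
  have : ∀ t : NNReal, ∃ r : ℝ, 0 < t → ∀ x, t < w x → phi x ≤ r := by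
    intro t
    by_cases ht : 0 < t
    · obtain ⟨e⟩ := he t ht
      have hfin : {x | t < w x}.Finite := by
        have := (hu t ht).to_subtype
        exact Set.finite_coe_iff.1 (Finite.of_equiv _ e)
      obtain ⟨r, hr⟩ := (hfin.image phi).bddAbove
      exact ⟨r, fun _ x hx => hr (Set.mem_image_of_mem _ hx)⟩
    · exact ⟨0, fun h => absurd h ht⟩
  choose r hr using this
  exact ⟨r, (mem_Cset hu).2 ⟨he, hr⟩⟩

end compactness


/-- Existence of a Schwarz symmetric minimizer of the p-Sobolev seminorm among
functions equimeasurable with a given nonnegative ℓ^p function. -/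
theorem stmt18 (d : ℕ) (hd : 2 ≤ d) (p : ℝ) (hp : 1 ≤ p) (u : ZLat d → NNReal)
    (hu : (∑' x : ZLat d, (u x : ENNReal) ^ p) < ⊤) :
    ∃ v : ZLat d → NNReal, RZd d v = v ∧ Equimeasurable u v ∧
      gradNorm d p v =
        ⨅ (w : ZLat d → NNReal) (_ : Equimeasurable u w), gradNorm d p w := by
  have ha := adm hp hu
  obtain ⟨r, hr⟩ := mem_some ha (fun t _ => ⟨Equiv.refl _⟩ : Equimeasurable u u)
  obtain ⟨u', hu', hpol, -⟩ := exists_fullPol hp hu hr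
  have hu'' := fullPol_tight ha ((mem_Cset ha).1 hu').1 hpol
  obtain ⟨v, hv1, hv⟩ := LowerSemicontinuousOn.exists_isMinOn
    ⟨u', hu''⟩ (isCompact_Cset ha _) ((lsc_energy hp).lowerSemicontinuousOn _)
  obtain ⟨v', hv'1, hv'2, hv'3⟩ := exists_fullPol hp hu hv1
  have hE := ((mem_Cset ha).1 hv'1).1
  refine ⟨v', RZd_fixed hd hv'2, hE, le_antisymm ?_ (iInf₂_le v' hE)⟩
  refine le_iInf₂ fun w hw => ?_
  obtain ⟨s, hs⟩ := mem_some ha hw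
  obtain ⟨w', hw', hwpol, hwE⟩ := exists_fullPol hp hu hs
  have hw'' := fullPol_tight ha ((mem_Cset ha).1 hw').1 hwpol
  refine ENNReal.rpow_le_rpow ?_ (by positivity)
  exact hv'3.trans ((hv hw'').trans hwE)

end
end

section
/- Let d ≥ 2, σ > 0 and ω > 0, and set I_ω = inf{‖∇u‖₂² + ω‖u‖₂² : u : ℤ^d → [0,∞), Σ_x u(x)² < ∞, ‖u‖_{2σ+2} = 1}. Then the infimum is attained by a Schwarz symmetric function, i.e. there exists u : ℤ^d → [0,∞) with Σ_x u(x)² < ∞, ‖u‖_{2σ+2} = 1, u = R_{ℤ^d} u, and ‖∇u‖₂² + ω‖u‖₂² = I_ω. -/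
open Filter Topology

noncomputable section

namespace S19

/-- The squared gradient contribution of one edge. -/
def F (a b : NNReal) : ENNReal := ENNReal.ofReal (|(a : ℝ) - (b : ℝ)| ^ (2 : ℝ))

lemma F_symm (a b : NNReal) : F a b = F b a := by
  unfold F; rw [abs_sub_comm]

lemma F_self (a : NNReal) : F a a = 0 := by simp [F]

lemma F_eq (a b : NNReal) : F a b = ENNReal.ofReal (((a : ℝ) - (b : ℝ)) ^ 2) := by
  unfold F; rw [Real.rpow_two, sq_abs]

lemma F_pol_real (a a' b b' : ℝ) :
    (max a a' - max b b') ^ 2 + (min a a' - min b b') ^ 2 ≤ (a - b) ^ 2 + (a' - b') ^ 2 := by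
  rcases le_total a a' with h | h <;> rcases le_total b b' with h' | h' <;>
    simp only [max_eq_left, max_eq_right, min_eq_left, min_eq_right, h, h'] <;>
    nlinarith [mul_nonneg (sub_nonneg.2 h) (sub_nonneg.2 h')]

lemma F_pol (a a' b b' : NNReal) :
    F (max a a') (max b b') + F (min a a') (min b b') ≤ F a b + F a' b' := by
  simp only [F_eq]
  rw [← ENNReal.ofReal_add (sq_nonneg _) (sq_nonneg _),
    ← ENNReal.ofReal_add (sq_nonneg _) (sq_nonneg _)]
  apply ENNReal.ofReal_le_ofReal
  push_cast
  exact F_pol_real a a' b b'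

lemma F_trunc (a b t : NNReal) : F (a - t) (b - t) ≤ F a b := by
  simp only [F_eq]
  apply ENNReal.ofReal_le_ofReal
  rw [sq_le_sq, NNReal.coe_sub_def, NNReal.coe_sub_def]
  have := abs_max_sub_max_le_abs ((a : ℝ) - t) (b - t) 0
  simpa using this

lemma F_smul (c a b : NNReal) : F (c * a) (c * b) = (c : ENNReal) ^ 2 * F a b := by
  simp only [F_eq]
  rw [← ENNReal.ofReal_coe_nnreal, ← ENNReal.ofReal_pow (by positivity),
    ← ENNReal.ofReal_mul (by positivity)]
  congr 1; push_cast; ring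

lemma F_cont {d : ℕ} (x y : ZLat d) : Continuous fun u : ZLat d → NNReal => F (u x) (u y) := by
  simp only [F_eq]
  refine ENNReal.continuous_ofReal.comp ?_
  fun_prop

/-- The `2d` unit steps. -/
def v {d : ℕ} (a : Fin d × Bool) : ZLat d := if a.2 then latE a.1 else -latE a.1

lemma grad_eq {d : ℕ} (u : ZLat d → NNReal) :
    gradEnergy d 2 u = ∑' x : ZLat d, ∑ i : Fin d, F (u (x + latE i)) (u x) := by
  unfold gradEnergy
  simp only [tsum_fintype]; rfl

lemma two_grad {d : ℕ} (u : ZLat d → NNReal) :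
    2 * gradEnergy d 2 u = ∑' x : ZLat d, ∑ a : Fin d × Bool, F (u x) (u (x + v a)) := by
  have h1 : ∀ x : ZLat d, ∑ a : Fin d × Bool, F (u x) (u (x + v a)) =
      ∑ i, F (u (x + latE i)) (u x) + ∑ i, F (u x) (u (x - latE i)) := by
    intro x
    rw [Fintype.sum_prod_type, ← Finset.sum_add_distrib]
    apply Finset.sum_congr rfl
    intro i _
    simp [v, F_symm (u x) (u (x + latE i)), sub_eq_add_neg]
  simp only [h1]
  rw [ENNReal.tsum_add, ← grad_eq, two_mul]
  congr 1
  rw [grad_eq]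
  have e1 : ∀ g : ZLat d → Fin d → ENNReal, ∑' x, ∑ i, g x i = ∑ i, ∑' x, g x i := by
    intro g
    have := ENNReal.tsum_comm (f := g)
    simpa only [tsum_fintype] using this
  rw [e1, e1]
  apply Finset.sum_congr rfl
  intro i _
  rw [← (Equiv.addRight (latE i)).tsum_eq (fun x => F (u x) (u (x - latE i)))]
  simp

/-- Ranking function: strictly increasing in spiral order along every line. -/
def Nz {d : ℕ} (x : ZLat d) : ℤ := ∑ i : Fin d, ((2 * d + 1) * x i - (d - (i : ℕ))) ^ 2

lemma Nz_nonneg {d : ℕ} (x : ZLat d) : 0 ≤ Nz x := Finset.sum_nonneg fun _ _ => sq_nonneg _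

lemma Nz_sub {d : ℕ} (x β : ZLat d) (k : ℤ) : Nz (x - k • β) = Nz x
    - 2 * (2 * d + 1) * k * ∑ i : Fin d, β i * ((2 * d + 1) * x i - (d - (i : ℕ)))
    + (2 * d + 1) ^ 2 * k ^ 2 * ∑ i, β i * β i := by
  unfold Nz
  rw [Finset.mul_sum, Finset.mul_sum, ← Finset.sum_sub_distrib, ← Finset.sum_add_distrib]
  apply Finset.sum_congr rfl
  intro i _
  simp only [Pi.sub_apply, Pi.smul_apply, smul_eq_mul]
  ring

/-- A direction vector `β` with its integer pairing `q`. -/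
structure GoodDir {d : ℕ} (β : ZLat d) (q : ZLat d →ₗ[ℤ] ℤ) : Prop where
  qβ : q β = 2
  perm : ∃ π : Fin d × Bool → Fin d × Bool, Function.Involutive π ∧
    ∀ a, v (π a) = v a - q (v a) • β
  cross : ∀ a, q (v a) ≤ 1 ∨ v a = β
  N0 : ∀ x, 0 < q x → Nz x < Nz (x - q x • β)
  N1 : ∀ x, q x < 1 → Nz x < Nz (x - (q x - 1) • β)

/-- Affine reflection. -/
def refl {d : ℕ} (β : ZLat d) (q : ZLat d →ₗ[ℤ] ℤ) (c : ℤ) (x : ZLat d) : ZLat d :=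
  x - (q x - c) • β

lemma good_of_dot {d : ℕ} {β : ZLat d} {q : ZLat d →ₗ[ℤ] ℤ} (hq : q β = 2)
    (hdot : ∀ x : ZLat d, 2 * ∑ i, β i * x i = (∑ i, β i * β i) * q x)
    (h1 : 0 < ∑ i : Fin d, β i * ((d : ℤ) - (i : ℕ)))
    (h2 : 2 * ∑ i : Fin d, β i * ((d : ℤ) - (i : ℕ)) < (2 * d + 1) * ∑ i, β i * β i)
    (hperm : ∃ π : Fin d × Bool → Fin d × Bool, Function.Involutive π ∧
      ∀ a, v (π a) = v a - q (v a) • β)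
    (hcross : ∀ a, q (v a) ≤ 1 ∨ v a = β) : GoodDir β q := by
  have key : ∀ x (c : ℤ), Nz (x - (q x - c) • β) = Nz x + (2 * d + 1) * ((q x - c) *
      (2 * ∑ i : Fin d, β i * ((d : ℤ) - (i : ℕ)) - (2 * d + 1) * (∑ i, β i * β i) * c)) := by
    intro x c
    rw [Nz_sub]
    have : ∑ i : Fin d, β i * ((2 * d + 1) * x i - (d - (i : ℕ))) =
        (2 * d + 1) * ∑ i, β i * x i - ∑ i : Fin d, β i * ((d : ℤ) - (i : ℕ)) := by
      rw [Finset.mul_sum, ← Finset.sum_sub_distrib]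
      apply Finset.sum_congr rfl; intro i _; ring
    rw [this]
    linear_combination (-(2 * (d : ℤ) + 1) ^ 2 * (q x - c)) * hdot x
  have hM : (0 : ℤ) < 2 * d + 1 := by positivity
  refine ⟨hq, hperm, hcross, fun x hx => ?_, fun x hx => ?_⟩
  · have := key x 0
    rw [sub_zero] at this
    rw [this]
    have : 0 < (2 * (d : ℤ) + 1) * (q x *
      (2 * ∑ i : Fin d, β i * ((d : ℤ) - (i : ℕ)) - (2 * d + 1) * (∑ i, β i * β i) * 0)) := by
      apply mul_pos hM (mul_pos hx _); linarith
    linarith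
  · rw [key x 1]
    have : 0 < (2 * (d : ℤ) + 1) * ((q x - 1) *
      (2 * ∑ i : Fin d, β i * ((d : ℤ) - (i : ℕ)) - (2 * d + 1) * (∑ i, β i * β i) * 1)) := by
      apply mul_pos hM (mul_pos_of_neg_of_neg _ _) <;> linarith
    linarith

/-- Coordinate projection. -/
def pj {d : ℕ} (i : Fin d) : ZLat d →ₗ[ℤ] ℤ := LinearMap.proj i

@[simp] lemma pj_apply {d : ℕ} (i : Fin d) (x : ZLat d) : pj i x = x i := rfl

lemma sum_latE {d : ℕ} (i : Fin d) (w : Fin d → ℤ) : ∑ k, (latE i k) * w k = w i := by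
  simp [latE]

lemma good_std {d : ℕ} (i : Fin d) : GoodDir (latE i) ((2 : ℤ) • pj i) := by
  have hi := i.2
  apply good_of_dot
  · simp [latE]
  · intro x
    simp only [sum_latE]
    simp [latE]
  · simp only [sum_latE]; omega
  · simp only [sum_latE]
    simp [latE]
  · refine ⟨fun a => (a.1, if a.1 = i then !a.2 else a.2), ?_, ?_⟩
    · rintro ⟨k, b⟩
      by_cases h : k = i <;> simp [h]
    · rintro ⟨k, b⟩
      ext l
      by_cases h : k = i
      · subst h; cases b <;> simp [v, latE] <;> split_ifs <;> simp
      · have h' : ¬ i = k := fun h' => h h'.symm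
        cases b <;> simp [v, latE, h, h']
  · rintro ⟨k, b⟩
    by_cases h : k = i
    · subst h; cases b <;> simp [v, latE]
    · have h' : ¬ i = k := fun h' => h h'.symm
      cases b <;> simp [v, latE, h']

lemma good_plus {d : ℕ} (i j : Fin d) (hij : i < j) :
    GoodDir (latE i + latE j) (pj i + pj j) := by
  have hi := i.2
  have hj := j.2
  have hlt : (i : ℕ) < j := hij
  have hne : i ≠ j := hij.ne
  have hne' : j ≠ i := hij.ne'
  have hs : ∀ w : Fin d → ℤ, ∑ k, (latE i + latE j : ZLat d) k * w k = w i + w j := by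
    intro w; simp only [Pi.add_apply, add_mul, Finset.sum_add_distrib, sum_latE]
  apply good_of_dot
  · simp [latE, hne, hne']
  · intro x
    simp only [hs]
    simp [latE, hne, hne']
  · simp only [hs]; omega
  · simp only [hs]
    simp [latE, hne, hne']; omega
  · refine ⟨fun a => if a.1 = i then (j, !a.2) else if a.1 = j then (i, !a.2) else a, ?_, ?_⟩
    · rintro ⟨k, b⟩
      by_cases h : k = i
      · simp [h, hne']
      · by_cases h2 : k = j <;> simp [h, h2, hne']
    · rintro ⟨k, b⟩
      by_cases h : k = i
      · subst h; ext l; cases b <;> simp [v, latE, hne']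
      · by_cases h2 : k = j
        · subst h2; ext l; cases b <;> simp [v, latE, hne, hne']
        · have h' : ¬ i = k := fun h' => h h'.symm
          have h2' : ¬ j = k := fun h' => h2 h'.symm
          cases b <;> simp [v, latE, h, h', h2, h2']
  · rintro ⟨k, b⟩
    left
    by_cases h : k = i
    · subst h; cases b <;> simp [v, latE, hne']
    · have h' : ¬ i = k := fun h' => h h'.symm
      cases b <;> simp [v, latE, h'] <;> split_ifs <;> simp

lemma good_minus {d : ℕ} (i j : Fin d) (hij : i < j) :
    GoodDir (latE i - latE j) (pj i - pj j) := by
  have hi := i.2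
  have hj := j.2
  have hlt : (i : ℕ) < j := hij
  have hne : i ≠ j := hij.ne
  have hne' : j ≠ i := hij.ne'
  have hs : ∀ w : Fin d → ℤ, ∑ k, (latE i - latE j : ZLat d) k * w k = w i - w j := by
    intro w; simp only [Pi.sub_apply, sub_mul, Finset.sum_sub_distrib, sum_latE]
  apply good_of_dot
  · simp [latE, hne, hne']
  · intro x
    simp only [hs]
    simp [latE, hne, hne']
  · simp only [hs]; omega
  · simp only [hs]
    simp [latE, hne, hne']; omega
  · refine ⟨fun a => if a.1 = i then (j, a.2) else if a.1 = j then (i, a.2) else a, ?_, ?_⟩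
    · rintro ⟨k, b⟩
      by_cases h : k = i
      · simp [h, hne']
      · by_cases h2 : k = j <;> simp [h, h2, hne']
    · rintro ⟨k, b⟩
      by_cases h : k = i
      · subst h; ext l; cases b <;> (simp [v, latE, hne']; try ring)
      · by_cases h2 : k = j
        · subst h2; ext l; cases b <;> (simp [v, latE, hne, hne']; try ring)
        · have h' : ¬ i = k := fun h' => h h'.symm
          have h2' : ¬ j = k := fun h' => h2 h'.symm
          cases b <;> simp [v, latE, h, h', h2, h2']
  · rintro ⟨k, b⟩
    left
    by_cases h : k = i
    · subst h; cases b <;> simp [v, latE, hne']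
    · have h' : ¬ i = k := fun h' => h h'.symm
      cases b <;> simp [v, latE, h'] <;> split_ifs <;> simp

section pol
variable {d : ℕ} {β : ZLat d} {q : ZLat d →ₗ[ℤ] ℤ}

lemma q_refl (h : GoodDir β q) (c : ℤ) (x : ZLat d) : q (refl β q c x) = 2 * c - q x := by
  simp only [refl, map_sub, map_smul, h.qβ, smul_eq_mul]; ring

lemma refl_refl (h : GoodDir β q) (c : ℤ) : Function.Involutive (refl β q c) := by
  intro x
  have := q_refl h c x
  rw [refl, this, refl, sub_sub, ← add_smul]
  have e : q x - c + (2 * c - q x - c) = 0 := by ring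
  rw [e]; simp

lemma refl_fix {c : ℤ} {x : ZLat d} (hx : q x = c) : refl β q c x = x := by
  simp [refl, hx]

lemma sideN (h : GoodDir β q) {c : ℤ} (hc : c = 0 ∨ c = 1) : ∃ s : ℤ, (s = 1 ∨ s = -1) ∧
    ∀ x, (0 < s * (q x - c) → Nz x < Nz (refl β q c x)) ∧
      (s * (q x - c) < 0 → Nz (refl β q c x) < Nz x) := by
  have aux : ∀ s : ℤ, (∀ x, 0 < s * (q x - c) → Nz x < Nz (refl β q c x)) →
      ∀ x, (0 < s * (q x - c) → Nz x < Nz (refl β q c x)) ∧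
      (s * (q x - c) < 0 → Nz (refl β q c x) < Nz x) := by
    intro s hs x
    refine ⟨hs x, fun hx => ?_⟩
    have := hs (refl β q c x) (by rw [q_refl h]; nlinarith)
    rwa [refl_refl h] at this
  rcases hc with rfl | rfl
  · refine ⟨1, Or.inl rfl, aux _ fun x hx => ?_⟩
    have := h.N0 x (by linarith)
    simpa [refl] using this
  · refine ⟨-1, Or.inr rfl, aux _ fun x hx => ?_⟩
    exact h.N1 x (by linarith)

/-- Polarization (two-point rearrangement). -/
def pol (τ : ZLat d → ZLat d) (u : ZLat d → NNReal) (x : ZLat d) : NNReal :=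
  if Nz x ≤ Nz (τ x) then max (u x) (u (τ x)) else min (u x) (u (τ x))

lemma Nz_eq_fix (h : GoodDir β q) {c : ℤ} (hc : c = 0 ∨ c = 1) {x : ZLat d}
    (hx : Nz x = Nz (refl β q c x)) : refl β q c x = x := by
  obtain ⟨s, hs, hN⟩ := sideN h hc
  apply refl_fix
  by_contra hne
  rcases lt_trichotomy (s * (q x - c)) 0 with h1 | h1 | h1
  · have := (hN x).2 h1; omega
  · rcases hs with rfl | rfl <;> omega
  · have := (hN x).1 h1; omega

lemma pol_good (h : GoodDir β q) {c : ℤ} (hc : c = 0 ∨ c = 1) (u : ZLat d → NNReal) {x : ZLat d}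
    (hx : Nz x ≤ Nz (refl β q c x)) : pol (refl β q c) u x = max (u x) (u (refl β q c x)) ∧
      pol (refl β q c) u (refl β q c x) = min (u x) (u (refl β q c x)) := by
  refine ⟨if_pos hx, ?_⟩
  rcases hx.lt_or_eq with h1 | h1
  · rw [pol, refl_refl h, if_neg (not_le.2 h1), min_comm]
  · have := Nz_eq_fix h hc h1
    rw [pol, refl_refl h, this]; simp

lemma pol_bad (h : GoodDir β q) {c : ℤ} (hc : c = 0 ∨ c = 1) (u : ZLat d → NNReal) {x : ZLat d}
    (hx : Nz (refl β q c x) ≤ Nz x) : pol (refl β q c) u x = min (u x) (u (refl β q c x)) ∧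
      pol (refl β q c) u (refl β q c x) = max (u x) (u (refl β q c x)) := by
  have := pol_good h hc u (x := refl β q c x) (by rwa [refl_refl h])
  rw [refl_refl h] at this
  rw [max_comm, min_comm]
  exact ⟨this.2, this.1⟩

/-- The reflection as an equivalence. -/
def reflE (h : GoodDir β q) (c : ℤ) : ZLat d ≃ ZLat d := (refl_refl h c).toPerm

lemma tsum_refl (h : GoodDir β q) (c : ℤ) (f : ZLat d → ENNReal) :
    ∑' x, f (refl β q c x) = ∑' x, f x := (reflE h c).tsum_eq f

lemma two_mul_tsum (h : GoodDir β q) (c : ℤ) (f : ZLat d → ENNReal) :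
    2 * ∑' x, f x = ∑' x, (f x + f (refl β q c x)) := by
  rw [ENNReal.tsum_add, tsum_refl h, two_mul]

lemma two_cancel {a b : ENNReal} (h : 2 * a ≤ 2 * b) : a ≤ b :=
  (ENNReal.mul_le_mul_iff_right (by simp) (by simp)).1 h

lemma tsum_pol (h : GoodDir β q) {c : ℤ} (hc : c = 0 ∨ c = 1) (u : ZLat d → NNReal)
    (g : NNReal → ENNReal) : ∑' x, g (pol (refl β q c) u x) = ∑' x, g (u x) := by
  have key : 2 * ∑' x, g (pol (refl β q c) u x) = 2 * ∑' x, g (u x) := by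
    rw [two_mul_tsum h c, two_mul_tsum h c]
    congr 1; ext x
    rcases le_total (Nz x) (Nz (refl β q c x)) with hx | hx
    · obtain ⟨h1, h2⟩ := pol_good h hc u hx
      rw [h1, h2]
      rcases le_total (u x) (u (refl β q c x)) with h3 | h3 <;> simp [h3, add_comm]
    · obtain ⟨h1, h2⟩ := pol_bad h hc u hx
      rw [h1, h2]
      rcases le_total (u x) (u (refl β q c x)) with h3 | h3 <;> simp [h3, add_comm]
  exact le_antisymm (two_cancel key.le) (two_cancel key.ge)

lemma v_neg (a : Fin d × Bool) : v (a.1, !a.2) = -v a := by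
  rcases a with ⟨k, b⟩; cases b <;> simp [v]

lemma cross_eq (h : GoodDir β q) {c : ℤ} {x : ZLat d} {a : Fin d × Bool}
    (hx : (q x - c) * (q (x + v a) - c) < 0) : x + v a = refl β q c x := by
  rw [map_add] at hx
  rcases mul_neg_iff.1 hx with ⟨h1, h2⟩ | ⟨h1, h2⟩
  · have h3 := h.cross (a.1, !a.2)
    rw [v_neg, map_neg] at h3
    rcases h3 with h3 | h3
    · omega
    · have h4 : q (v a) = -2 := by
        have := h.qβ
        rw [← h3, map_neg] at this; omega
      have h5 : q x - c = 1 := by omega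
      rw [refl, h5, ← h3]; simp
  · rcases h.cross a with h3 | h3
    · omega
    · have h4 : q (v a) = 2 := by rw [h3]; exact h.qβ
      have h5 : q x - c = -1 := by omega
      rw [refl, h5, ← h3]; simp

lemma F_maxmin (a b : NNReal) : F (max a b) (min a b) = F a b := by
  rcases le_total a b with h | h <;> simp [h, F_symm]

lemma edge_pol (h : GoodDir β q) {c : ℤ} (hc : c = 0 ∨ c = 1) (u : ZLat d → NNReal)
    (x : ZLat d) (a : Fin d × Bool) :
    F (pol (refl β q c) u x) (pol (refl β q c) u (x + v a)) +
      F (pol (refl β q c) u (refl β q c x)) (pol (refl β q c) u (refl β q c (x + v a))) ≤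
    F (u x) (u (x + v a)) + F (u (refl β q c x)) (u (refl β q c (x + v a))) := by
  obtain ⟨s, hs, hN⟩ := sideN h hc
  have hgood : ∀ y, 0 ≤ s * (q y - c) → Nz y ≤ Nz (refl β q c y) := by
    intro y hy
    rcases hy.lt_or_eq with h1 | h1
    · exact ((hN y).1 h1).le
    · rw [refl_fix]; rcases hs with rfl | rfl <;> omega
  have hbad : ∀ y, s * (q y - c) ≤ 0 → Nz (refl β q c y) ≤ Nz y := by
    intro y hy
    rcases hy.lt_or_eq with h1 | h1
    · exact ((hN y).2 h1).le
    · rw [refl_fix]; rcases hs with rfl | rfl <;> omega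
  have hss : s * s = 1 := by rcases hs with rfl | rfl <;> rfl
  by_cases hcr : (q x - c) * (q (x + v a) - c) < 0
  · have hy := cross_eq h hcr
    rw [hy, refl_refl h]
    rcases le_total (Nz x) (Nz (refl β q c x)) with hx | hx
    · obtain ⟨h1, h2⟩ := pol_good h hc u hx
      rw [h1, h2, F_symm (min _ _), F_maxmin, F_symm (u (refl β q c x))]
    · obtain ⟨h1, h2⟩ := pol_bad h hc u hx
      rw [h1, h2, F_symm (min _ _), F_maxmin, F_symm (u (refl β q c x))]
  · push Not at hcr
    have : (0 ≤ s * (q x - c) ∧ 0 ≤ s * (q (x + v a) - c)) ∨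
        (s * (q x - c) ≤ 0 ∧ s * (q (x + v a) - c) ≤ 0) := by
      apply mul_nonneg_iff.1
      have : s * (q x - c) * (s * (q (x + v a) - c)) = (s * s) * ((q x - c) * (q (x + v a) - c)) := by
        ring
      rw [this, hss, one_mul]; exact hcr
    rcases this with ⟨hx, hy⟩ | ⟨hx, hy⟩
    · obtain ⟨h1, h2⟩ := pol_good h hc u (hgood _ hx)
      obtain ⟨h3, h4⟩ := pol_good h hc u (hgood _ hy)
      rw [h1, h2, h3, h4]
      exact F_pol _ _ _ _
    · obtain ⟨h1, h2⟩ := pol_bad h hc u (hbad _ hx)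
      obtain ⟨h3, h4⟩ := pol_bad h hc u (hbad _ hy)
      rw [h1, h2, h3, h4, add_comm]
      exact F_pol _ _ _ _

lemma T_refl (h : GoodDir β q) (c : ℤ) (u : ZLat d → NNReal) :
    ∑' x : ZLat d, ∑ a, F (u (refl β q c x)) (u (refl β q c (x + v a))) =
    ∑' x : ZLat d, ∑ a, F (u x) (u (x + v a)) := by
  obtain ⟨π, hπ, hv⟩ := h.perm
  rw [← tsum_refl h c (fun x => ∑ a, F (u x) (u (x + v a)))]
  congr 1; ext x
  rw [← Equiv.sum_comp hπ.toPerm]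
  apply Finset.sum_congr rfl
  intro a _
  congr 2
  have : v a = v (π a) - q (v (π a)) • β := by rw [← hv, hπ a]
  change refl β q c (x + v (π a)) = _
  conv_rhs => rw [this]
  simp only [refl, map_add]
  module

lemma grad_pol (h : GoodDir β q) {c : ℤ} (hc : c = 0 ∨ c = 1) (u : ZLat d → NNReal) :
    gradEnergy d 2 (pol (refl β q c) u) ≤ gradEnergy d 2 u := by
  apply two_cancel
  rw [two_grad, two_grad]
  apply two_cancel
  have : ∀ w : ZLat d → NNReal, 2 * ∑' x : ZLat d, ∑ a, F (w x) (w (x + v a)) =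
      ∑' x : ZLat d, ∑ a, (F (w x) (w (x + v a)) +
        F (w (refl β q c x)) (w (refl β q c (x + v a)))) := by
    intro w
    simp only [Finset.sum_add_distrib]
    rw [ENNReal.tsum_add, T_refl h, two_mul]
  rw [this, this]
  exact ENNReal.tsum_le_tsum fun x => Finset.sum_le_sum fun a _ => edge_pol h hc u x a

/-- Weight functional. -/
def W (u : ZLat d → NNReal) : ENNReal := ∑' x : ZLat d, (((Nz x).toNat : NNReal) * u x : NNReal)

lemma W_pol (h : GoodDir β q) {c : ℤ} (hc : c = 0 ∨ c = 1) (u : ZLat d → NNReal)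
    (hW : W u ≠ ⊤) {x : ZLat d} (hx : Nz x < Nz (refl β q c x)) (hu : u x < u (refl β q c x)) :
    W (pol (refl β q c) u) < W u := by
  have aux : ∀ (m n : ℕ) (a b : NNReal), m ≤ n →
      (m : NNReal) * max a b + n * min a b ≤ m * a + n * b := by
    intro m n a b hmn
    rcases le_total a b with h1 | h1
    · rw [max_eq_right h1, min_eq_left h1]
      obtain ⟨k, rfl⟩ := Nat.exists_eq_add_of_le hmn
      push_cast
      have : (k : NNReal) * a ≤ k * b := by gcongr
      calc _ = (m : NNReal) * a + m * b + k * a := by ring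
        _ ≤ (m : NNReal) * a + m * b + k * b := by gcongr
        _ = _ := by ring
    · rw [max_eq_left h1, min_eq_right h1]
  have key : 2 * W (pol (refl β q c) u) < 2 * W u := by
    have hW2 : 2 * W u ≠ ⊤ := ENNReal.mul_ne_top (by simp) hW
    unfold W at *
    rw [two_mul_tsum h c] at *
    rw [two_mul_tsum h c]
    have hle : ∀ y : ZLat d, ((((Nz y).toNat : NNReal) * pol (refl β q c) u y : NNReal) : ENNReal) +
        (((Nz (refl β q c y)).toNat : NNReal) * pol (refl β q c) u (refl β q c y) : NNReal) ≤
        (((Nz y).toNat : NNReal) * u y : NNReal) +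
        (((Nz (refl β q c y)).toNat : NNReal) * u (refl β q c y) : NNReal) := by
      intro y
      norm_cast
      rcases le_total (Nz y) (Nz (refl β q c y)) with hy | hy
      · obtain ⟨h1, h2⟩ := pol_good h hc u hy
        rw [h1, h2]
        exact aux _ _ _ _ (Int.toNat_le_toNat hy)
      · obtain ⟨h1, h2⟩ := pol_bad h hc u hy
        rw [h1, h2, add_comm, add_comm (_ * u y), min_comm, max_comm]
        exact aux _ _ _ _ (Int.toNat_le_toNat hy)
    refine ENNReal.tsum_lt_tsum (i := x) ?_ hle ?_
    · exact ne_top_of_le_ne_top hW2 (ENNReal.tsum_le_tsum hle)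
    · obtain ⟨h1, h2⟩ := pol_good h hc u hx.le
      rw [h1, h2]
      norm_cast
      rw [max_eq_right hu.le, min_eq_left hu.le]
      have hlt : (Nz x).toNat < (Nz (refl β q c x)).toNat := by
        have := Nz_nonneg x; omega
      have h3 : (((Nz x).toNat : NNReal) : ℝ) < ((Nz (refl β q c x)).toNat : NNReal) := by
        exact_mod_cast hlt
      have h4 : (u x : ℝ) < u (refl β q c x) := hu
      rw [← NNReal.coe_lt_coe]
      push_cast at h3 ⊢
      nlinarith
  exact lt_of_not_ge fun hge => absurd key (not_lt.2 (by gcongr))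

/-- Symmetry: invariance under all polarizations. -/
def Sym (u : ZLat d → NNReal) : Prop := ∀ (β : ZLat d) (q : ZLat d →ₗ[ℤ] ℤ), GoodDir β q →
  ∀ c : ℤ, (c = 0 ∨ c = 1) → ∀ x, Nz x < Nz (refl β q c x) → u (refl β q c x) ≤ u x

/-- The doubled coordinate of the `n`-th point in spiral order, with given parity. -/
def qv (p : ℤ) (n : ℕ) : ℤ := if ((n : ℤ) - p) % 2 = 0 then n else 1 - n

/-- The `n`-th point of the line through `x`. -/
def pt (β : ZLat d) (q : ZLat d →ₗ[ℤ] ℤ) (x : ZLat d) (n : ℕ) : ZLat d :=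
  x + ((qv (q x) n - q x) / 2) • β

lemma q_pt (h : GoodDir β q) (x : ZLat d) (n : ℕ) : q (pt β q x n) = qv (q x) n := by
  simp only [pt, map_add, map_smul, h.qβ, smul_eq_mul]
  unfold qv; split_ifs <;> omega

lemma posIdx_pt (h : GoodDir β q) (x : ZLat d) (n : ℕ) (hn : 1 ≤ n) :
    posIdx (q (pt β q x n)) = n := by
  rw [q_pt h]; unfold qv posIdx; split_ifs <;> omega

lemma posIdx_pos (m : ℤ) : 1 ≤ posIdx m := by
  unfold posIdx; split_ifs <;> omega

lemma pt_posIdx (h : GoodDir β q) (x : ZLat d) (k : ℤ) :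
    pt β q x (posIdx (q (x + k • β))) = x + k • β := by
  simp only [pt, map_add, map_smul, h.qβ, smul_eq_mul]
  congr 2
  unfold qv posIdx; split_ifs <;> omega

lemma pt_succ (h : GoodDir β q) {u : ZLat d → NNReal} (hu : Sym u) (x : ZLat d) (n : ℕ)
    (hn : 1 ≤ n) : u (pt β q x (n + 1)) ≤ u (pt β q x n) := by
  have hq := q_pt h x n
  by_cases hp : ((n : ℤ) - q x) % 2 = 0
  · have hq' : q (pt β q x n) = n := by rw [hq, qv, if_pos hp]
    have e : pt β q x (n + 1) = refl β q 0 (pt β q x n) := by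
      rw [refl, hq', pt, pt, qv, qv, if_pos hp, if_neg (by push_cast; omega), add_sub_assoc,
        ← sub_smul]
      congr 2; push_cast; omega
    rw [e]
    apply hu β q h 0 (Or.inl rfl)
    have := h.N0 (pt β q x n) (by omega)
    simpa [refl] using this
  · have hq' : q (pt β q x n) = 1 - n := by rw [hq, qv, if_neg hp]
    have e : pt β q x (n + 1) = refl β q 1 (pt β q x n) := by
      rw [refl, hq', pt, pt, qv, qv, if_neg hp, if_pos (by push_cast; omega), add_sub_assoc,
        ← sub_smul]
      congr 2; push_cast; omega
    rw [e]
    exact hu β q h 1 (Or.inr rfl) _ (h.N1 (pt β q x n) (by omega))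

lemma pt_anti (h : GoodDir β q) {u : ZLat d → NNReal} (hu : Sym u) (x : ZLat d) {m n : ℕ}
    (hm : 1 ≤ m) (hmn : m ≤ n) : u (pt β q x n) ≤ u (pt β q x m) := by
  induction n, hmn using Nat.le_induction with
  | base => exact le_rfl
  | succ n hmn ih => exact (pt_succ h hu x n (hm.trans hmn)).trans ih

lemma stepR_eq (h : GoodDir β q) {u : ZLat d → NNReal} (hu : Sym u) {e : Fin d → ℝ}
    (hl : ∀ x y : ZLat d, sameLine e x y ↔ ∃ k : ℤ, y = x + k • β)
    (hp : ∀ x, pairing e x = q x) : stepR e u = u := by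
  ext x
  rw [stepR, hp, nthLargest]
  congr 1
  have hx : pt β q x (posIdx (q x)) = x := by
    have := pt_posIdx h x 0
    simpa using this
  have hn := posIdx_pos (q x)
  set n := posIdx (q x) with hndef
  apply IsGreatest.csSup_eq
  constructor
  · have hinj : Function.Injective (fun m : ℕ =>
        (⟨pt β q x (m + 1), (hl _ _).2 ⟨_, rfl⟩⟩ : {y : ZLat d // sameLine e x y})) := by
      intro a b hab
      have h1 : pt β q x (a + 1) = pt β q x (b + 1) := congrArg Subtype.val hab
      have := posIdx_pt h x (a + 1) (by omega)
      rw [h1, posIdx_pt h x (b + 1) (by omega)] at this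
      omega
    refine ⟨(Finset.range n).map ⟨_, hinj⟩, by simp, ?_⟩
    intro y hy
    obtain ⟨m, hm, rfl⟩ := Finset.mem_map.1 hy
    have hm := Finset.mem_range.1 hm
    have := pt_anti h hu x (m := m + 1) (n := n) (by omega) (by omega)
    rwa [hx] at this
  · rintro t ⟨Ω, hΩ, ht⟩
    have : ∃ y ∈ Ω, n ≤ posIdx (q y.1) := by
      by_contra hcon
      push Not at hcon
      have h1 : (Ω.image fun y => posIdx (q y.1)).card = n := by
        rw [Finset.card_image_of_injective, hΩ]
        intro y z hyz
        obtain ⟨k, hk⟩ := (hl _ _).1 y.2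
        obtain ⟨k', hk'⟩ := (hl _ _).1 z.2
        have hyz : posIdx (q y.1) = posIdx (q z.1) := hyz
        apply Subtype.ext
        rw [hk, ← pt_posIdx h x k, ← hk, hyz, hk', pt_posIdx h x k']
      have h2 : (Ω.image fun y => posIdx (q y.1)) ⊆ Finset.Ico 1 n := by
        intro m hm
        obtain ⟨y, hy, rfl⟩ := Finset.mem_image.1 hm
        exact Finset.mem_Ico.2 ⟨posIdx_pos _, hcon y hy⟩
      have := Finset.card_le_card h2
      rw [h1, Nat.card_Ico] at this
      omega
    obtain ⟨y, hy, hny⟩ := this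
    obtain ⟨k, hk⟩ := (hl _ _).1 y.2
    refine (ht y hy).trans ?_
    have := pt_anti h hu x hn hny
    rw [hx, hk, pt_posIdx h x k, ← hk] at this
    exact this

end pol

lemma stepR_std {d : ℕ} {u : ZLat d → NNReal} (hu : Sym u) (i : Fin d) :
    stepR (stdVec d i) u = u := by
  apply stepR_eq (good_std i) hu
  · intro x y
    constructor
    · rintro ⟨c, hc⟩
      refine ⟨y i - x i, ?_⟩
      ext k
      have := congrFun hc k
      by_cases hk : k = i
      · subst hk; simp [latE]
      · simp [stdVec, hk] at this
        have h2 : (x k : ℝ) = y k := by linarith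
        have : x k = y k := by exact_mod_cast h2
        simp [latE, hk, this]
    · rintro ⟨k, rfl⟩
      refine ⟨-k, ?_⟩
      ext l
      simp [latE, stdVec]
      split_ifs <;> simp
  · intro x
    have : (2 : ℝ) * ∑ k, stdVec d i k * (x k : ℝ) = ((2 * x i : ℤ) : ℝ) := by
      simp [stdVec]
    rw [pairing, this, Int.floor_intCast]
    simp

lemma stepR_diag {d : ℕ} {u : ZLat d → NNReal} (hu : Sym u) (i j : Fin d) (hij : i < j) :
    stepR (fun k => (stdVec d i k + stdVec d j k) / 2) u = u := by
  have hne : i ≠ j := hij.ne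
  have hne' : j ≠ i := hij.ne'
  apply stepR_eq (good_plus i j hij) hu
  · intro x y
    constructor
    · rintro ⟨c, hc⟩
      refine ⟨y i - x i, ?_⟩
      ext k
      have h0 := congrFun hc i
      have h1 := congrFun hc j
      have := congrFun hc k
      simp [stdVec, hne, hne'] at h0 h1
      by_cases hk : k = i
      · subst hk; simp [latE, hne]
      · by_cases hk' : k = j
        · subst hk'; simp [latE, hk]
          have h2 : (x k : ℝ) - y k = x i - y i := by linarith
          have : x k - y k = x i - y i := by exact_mod_cast h2
          omega
        · simp [stdVec, hk, hk'] at this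
          have h2 : (x k : ℝ) = y k := by linarith
          have : x k = y k := by exact_mod_cast h2
          simp [latE, hk, hk', this]
    · rintro ⟨k, rfl⟩
      refine ⟨-(2 * k), ?_⟩
      ext l
      simp [latE, stdVec]
      split_ifs <;> ring
  · intro x
    have : (2 : ℝ) * ∑ k, (stdVec d i k + stdVec d j k) / 2 * (x k : ℝ) =
        ((x i + x j : ℤ) : ℝ) := by
      rw [Finset.mul_sum]
      have : ∀ k, (2 : ℝ) * ((stdVec d i k + stdVec d j k) / 2 * (x k : ℝ)) =
        stdVec d i k * x k + stdVec d j k * x k := by intro k; ring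
      simp only [this, Finset.sum_add_distrib]
      simp [stdVec]
    rw [pairing, this, Int.floor_intCast]
    simp

lemma stepR_anti {d : ℕ} {u : ZLat d → NNReal} (hu : Sym u) (i j : Fin d) (hij : i < j) :
    stepR (fun k => (stdVec d i k - stdVec d j k) / 2) u = u := by
  have hne : i ≠ j := hij.ne
  have hne' : j ≠ i := hij.ne'
  apply stepR_eq (good_minus i j hij) hu
  · intro x y
    constructor
    · rintro ⟨c, hc⟩
      refine ⟨y i - x i, ?_⟩
      ext k
      have h0 := congrFun hc i
      have h1 := congrFun hc j
      have := congrFun hc k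
      simp [stdVec, hne, hne'] at h0 h1
      by_cases hk : k = i
      · subst hk; simp [latE, hne]
      · by_cases hk' : k = j
        · subst hk'; simp [latE, hk]
          have h2 : (x k : ℝ) - y k = - (x i - y i) := by linarith
          have : x k - y k = - (x i - y i) := by exact_mod_cast h2
          omega
        · simp [stdVec, hk, hk'] at this
          have h2 : (x k : ℝ) = y k := by linarith
          have : x k = y k := by exact_mod_cast h2
          simp [latE, hk, hk', this]
    · rintro ⟨k, rfl⟩
      refine ⟨-(2 * k), ?_⟩
      ext l
      simp [latE, stdVec]
      split_ifs <;> ring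
  · intro x
    have : (2 : ℝ) * ∑ k, (stdVec d i k - stdVec d j k) / 2 * (x k : ℝ) =
        ((x i - x j : ℤ) : ℝ) := by
      rw [Finset.mul_sum]
      have : ∀ k, (2 : ℝ) * ((stdVec d i k - stdVec d j k) / 2 * (x k : ℝ)) =
        stdVec d i k * x k - stdVec d j k * x k := by intro k; ring
      simp only [this, Finset.sum_sub_distrib]
      simp [stdVec]
    rw [pairing, this, Int.floor_intCast]
    simp

lemma RZd_eq {d : ℕ} (hd : 2 ≤ d) {u : ZLat d → NNReal} (hu : Sym u) : RZd d u = u := by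
  have hmem : ∀ e ∈ EvecList d, stepR e u = u := by
    intro e he
    simp only [EvecList, List.mem_append, List.mem_map, List.mem_flatMap, List.mem_filterMap,
      List.mem_finRange, true_and, Option.ite_none_right_eq_some, Option.some.injEq] at he
    rcases he with (⟨i, rfl⟩ | ⟨i, j, hij, rfl⟩) | ⟨i, j, hij, rfl⟩
    · exact stepR_std hu i
    · exact stepR_diag hu i j hij
    · exact stepR_anti hu i j hij
  have hlen : 0 < (EvecList d).length := by
    simp only [EvecList, List.length_append, List.length_map, List.length_finRange]; omega
  have hit : ∀ k, iterR d u k = u := by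
    intro k
    induction k with
    | zero => rfl
    | succ k ih =>
      rw [iterR, ih]
      apply hmem
      rw [List.getD_eq_getElem _ _ (Nat.mod_lt _ hlen)]
      exact List.getElem_mem _
  ext x
  simp only [RZd, hit]
  rw [Tendsto.limUnder_eq tendsto_const_nhds]

section final
variable {d : ℕ}

/-- Sum of `r`-th powers. -/
def Pw (r : ℝ) (u : ZLat d → NNReal) : ENNReal := ∑' x : ZLat d, (u x : ENNReal) ^ r

/-- The energy functional. -/
def J (ω : NNReal) (u : ZLat d → NNReal) : ENNReal :=
  gradEnergy d 2 u + (ω : ENNReal) * ∑' x : ZLat d, (u x : ENNReal) ^ (2 : ℝ)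

lemma pow_cont (r : ℝ) (x : ZLat d) :
    Continuous fun u : ZLat d → NNReal => (u x : ENNReal) ^ r :=
  ENNReal.continuous_rpow_const.comp (ENNReal.continuous_coe.comp (continuous_apply x))

lemma lsc_Pw (r : ℝ) : LowerSemicontinuous (Pw r : (ZLat d → NNReal) → ENNReal) :=
  lowerSemicontinuous_tsum fun x => (pow_cont r x).lowerSemicontinuous

lemma lsc_W : LowerSemicontinuous (W : (ZLat d → NNReal) → ENNReal) := by
  refine lowerSemicontinuous_tsum fun x => Continuous.lowerSemicontinuous ?_
  exact ENNReal.continuous_coe.comp (continuous_const.mul (continuous_apply x))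

lemma lsc_J (ω : NNReal) : LowerSemicontinuous (J ω : (ZLat d → NNReal) → ENNReal) := by
  have : (J ω : (ZLat d → NNReal) → ENNReal) = fun u =>
      (∑' x : ZLat d, ∑ i : Fin d, F (u (x + latE i)) (u x)) +
        ∑' x : ZLat d, (ω : ENNReal) * (u x : ENNReal) ^ (2 : ℝ) := by
    ext u; rw [J, grad_eq, ENNReal.tsum_mul_left]
  rw [this]
  refine LowerSemicontinuous.add ?_ ?_
  · refine lowerSemicontinuous_tsum fun x => Continuous.lowerSemicontinuous ?_
    exact continuous_finsetSum _ fun i _ => F_cont _ _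
  · refine lowerSemicontinuous_tsum fun x => Continuous.lowerSemicontinuous ?_
    exact (ENNReal.continuous_const_mul ENNReal.coe_ne_top).comp (pow_cont 2 x)

lemma J_pol {β : ZLat d} {q : ZLat d →ₗ[ℤ] ℤ} (h : GoodDir β q) {c : ℤ} (hc : c = 0 ∨ c = 1)
    (ω : NNReal) (u : ZLat d → NNReal) : J ω (pol (refl β q c) u) ≤ J ω u := by
  unfold J
  rw [tsum_pol h hc u (fun t => (t : ENNReal) ^ (2 : ℝ))]
  gcongr
  exact grad_pol h hc u

lemma B_finite (n : ℤ) : {x : ZLat d | Nz x ≤ n}.Finite := by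
  apply (Set.finite_Icc (fun _ : Fin d => -(n + d)) (fun _ => n + d)).subset
  intro x hx
  have key : ∀ i, -(n + d) ≤ x i ∧ x i ≤ n + d := by
    intro i
    have hi := i.2
    have h1 : ((2 * d + 1) * x i - (d - (i : ℕ))) ^ 2 ≤ n := by
      refine le_trans ?_ hx
      exact Finset.single_le_sum (f := fun i : Fin d => ((2 * (d : ℤ) + 1) * x i - (d - (i : ℕ))) ^ 2)
        (fun _ _ => sq_nonneg _) (Finset.mem_univ i)
    set t := (2 * (d : ℤ) + 1) * x i - (d - (i : ℕ)) with ht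
    have h2 : |t| ≤ n := by
      refine le_trans ?_ h1
      rw [← sq_abs]
      rcases (abs_nonneg t).lt_or_eq with h | h
      · nlinarith
      · rw [← h]; simp
    have h3 := abs_le.1 h2
    have hd : (0 : ℤ) ≤ d := by positivity
    have hii : ((i : ℕ) : ℤ) < d := by exact_mod_cast hi
    constructor
    · by_contra hcon
      push Not at hcon
      have : x i < 0 := by have := abs_nonneg t; linarith
      nlinarith
    · by_contra hcon
      push Not at hcon
      have : 0 < x i := by have := abs_nonneg t; linarith
      nlinarith
  exact ⟨fun i => (key i).1, fun i => (key i).2⟩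

lemma le_one_of_Pw {r : ℝ} (hr : 0 < r) {u : ZLat d → NNReal} (hu : Pw r u ≤ 1) (x : ZLat d) :
    u x ≤ 1 := by
  by_contra hcon
  push Not at hcon
  have h1 : (1 : ENNReal) < (u x : ENNReal) ^ r := ENNReal.one_lt_rpow (by exact_mod_cast hcon) hr
  exact absurd ((ENNReal.le_tsum x).trans hu) (not_le.2 h1)

lemma unit_compact : IsCompact {u : ZLat d → NNReal | ∀ x, u x ≤ 1} := by
  have : {u : ZLat d → NNReal | ∀ x, u x ≤ 1} = Set.univ.pi fun _ => Set.Icc 0 1 := by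
    ext u; simp [Pi.le_def]
  rw [this]
  exact isCompact_univ_pi fun _ => isCompact_Icc

lemma fin_sym {r : ℝ} (hr : 0 < r) (ω : NNReal) {w : ZLat d → NNReal}
    (hw : {x | w x ≠ 0}.Finite) (hP : Pw r w = 1) :
    ∃ u : ZLat d → NNReal, Sym u ∧ Pw r u = 1 ∧ J ω u ≤ J ω w := by
  obtain ⟨n, hn⟩ : ∃ n : ℤ, ∀ x, w x ≠ 0 → Nz x ≤ n := by
    obtain ⟨n, hn⟩ := (hw.image Nz).bddAbove
    exact ⟨n, fun x hx => hn ⟨x, hx, rfl⟩⟩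
  set B : Finset (ZLat d) := (B_finite n).toFinset with hB
  have hBm : ∀ x, x ∈ B ↔ Nz x ≤ n := by intro x; simp [hB]
  have hsum : ∀ u : ZLat d → NNReal, (∀ x, x ∉ B → u x = 0) →
      Pw r u = ∑ x ∈ B, (u x : ENNReal) ^ r := by
    intro u hu
    apply tsum_eq_sum
    intro x hx
    simp [hu x hx, hr]
  set K : Set (ZLat d → NNReal) := {u | (∀ x, x ∉ B → u x = 0) ∧
    ∑ x ∈ B, (u x : ENNReal) ^ r = 1 ∧ J ω u ≤ J ω w} with hK
  have hclosed : IsClosed K := by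
    have h1 : IsClosed {u : ZLat d → NNReal | ∀ x, x ∉ B → u x = 0} := by
      simp only [Set.ofPred_forall]
      exact isClosed_iInter fun x => isClosed_iInter fun _ =>
        isClosed_eq (continuous_apply x) continuous_const
    have h2 : IsClosed {u : ZLat d → NNReal | ∑ x ∈ B, (u x : ENNReal) ^ r = 1} :=
      isClosed_eq (continuous_finsetSum _ fun x _ => pow_cont r x) continuous_const
    have h3 : IsClosed {u : ZLat d → NNReal | J ω u ≤ J ω w} :=
      (lsc_J ω).isClosed_preimage (J ω w)
    exact h1.inter (h2.inter h3)
  have hcomp : IsCompact K := by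
    apply unit_compact.of_isClosed_subset hclosed
    rintro u ⟨h1, h2, -⟩ x
    exact le_one_of_Pw hr (by rw [hsum u h1, h2]) x
  have hwB : ∀ x, x ∉ B → w x = 0 := by
    intro x hx
    by_contra h
    exact hx ((hBm x).2 (hn x h))
  have hne : K.Nonempty := ⟨w, hwB, by rw [← hsum w hwB, hP], le_rfl⟩
  obtain ⟨u, huK, hmin⟩ := LowerSemicontinuousOn.exists_isMinOn hne hcomp
    (lsc_W.lowerSemicontinuousOn K)
  have hWtop : W u ≠ ⊤ := by
    unfold W
    rw [tsum_eq_sum (s := B)]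
    · exact (ENNReal.sum_lt_top.2 fun x _ => ENNReal.coe_lt_top).ne
    · intro x hx
      simp [huK.1 x hx]
  refine ⟨u, ?_, by rw [hsum u huK.1, huK.2.1], huK.2.2⟩
  intro β q h c hc x hx
  by_contra hcon
  push Not at hcon
  have hlt := W_pol h hc u hWtop hx hcon
  have hz : ∀ y, y ∉ B → pol (refl β q c) u y = 0 := by
    intro y hy
    have h0 := huK.1 y hy
    rcases le_total (Nz y) (Nz (refl β q c y)) with h1 | h1
    · rw [(pol_good h hc u h1).1, h0, huK.1 (refl β q c y)]
      · simp
      · rw [hBm] at hy ⊢; omega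
    · rw [(pol_bad h hc u h1).1, h0]; simp
  have hmem : pol (refl β q c) u ∈ K := by
    refine ⟨hz, ?_, (J_pol h hc ω u).trans huK.2.2⟩
    rw [← hsum _ hz, Pw, tsum_pol h hc u (fun t => (t : ENNReal) ^ r), ← huK.2.1, ← hsum u huK.1,
      Pw]
  exact absurd (hmin hmem) (not_le.2 hlt)

lemma decay {u : ZLat d → NNReal} (hu : Sym u) (x : ZLat d) (i : Fin d) :
    ((x i).natAbs : ENNReal) * (u x : ENNReal) ^ (2 : ℝ) ≤ Pw 2 u := by
  have h := good_std i
  set q := ((2 : ℤ) • pj i : ZLat d →ₗ[ℤ] ℤ) with hq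
  set n := posIdx (q x) with hn
  have hx : pt (latE i) q x n = x := by
    have := pt_posIdx h x 0
    simpa using this
  have hinj : Function.Injective (fun m : ℕ => pt (latE i) q x (m + 1)) := by
    intro a b hab
    have h1 : pt (latE i) q x (a + 1) = pt (latE i) q x (b + 1) := hab
    have := posIdx_pt h x (a + 1) (by omega)
    rw [h1, posIdx_pt h x (b + 1) (by omega)] at this
    omega
  have hle : (x i).natAbs ≤ n := by
    have : q x = 2 * x i := by simp [hq]
    rw [hn, this, posIdx]; split_ifs <;> omega
  calc ((x i).natAbs : ENNReal) * (u x : ENNReal) ^ (2 : ℝ)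
      ≤ (n : ENNReal) * (u x : ENNReal) ^ (2 : ℝ) := by gcongr
    _ = ∑ m ∈ Finset.range n, (u x : ENNReal) ^ (2 : ℝ) := by simp
    _ ≤ ∑ m ∈ Finset.range n, (u (pt (latE i) q x (m + 1)) : ENNReal) ^ (2 : ℝ) := by
        apply Finset.sum_le_sum
        intro m hm
        have hm := Finset.mem_range.1 hm
        have := pt_anti h hu x (m := m + 1) (n := n) (by omega) (by omega)
        rw [hx] at this
        gcongr
    _ = ∑ y ∈ (Finset.range n).map ⟨_, hinj⟩, (u y : ENNReal) ^ (2 : ℝ) := by simp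
    _ ≤ Pw 2 u := ENNReal.sum_le_tsum _

/-- Finite boxes. -/
def Box (d R : ℕ) : Finset (ZLat d) := Finset.Icc (fun _ => -(R : ℤ)) (fun _ => (R : ℤ))

lemma tail {σ : ℝ} (hσ : 0 < σ) {u : ZLat d → NNReal} (hu : Sym u) {D : ENNReal}
    (hD : Pw 2 u ≤ D) (R : ℕ) :
    Pw (2 * σ + 2) u ≤ ∑ x ∈ Box d R, (u x : ENNReal) ^ (2 * σ + 2) +
      D * (D / ((R + 1 : ℕ) : ENNReal)) ^ σ := by
  classical
  have hterm : ∀ x : ZLat d, (u x : ENNReal) ^ (2 * σ + 2) ≤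
      (if x ∈ Box d R then (u x : ENNReal) ^ (2 * σ + 2) else 0) +
      (u x : ENNReal) ^ (2 : ℝ) * (D / ((R + 1 : ℕ) : ENNReal)) ^ σ := by
    intro x
    by_cases hx : x ∈ Box d R
    · rw [if_pos hx]; exact le_self_add
    · rw [if_neg hx, zero_add]
      obtain ⟨i, hi⟩ : ∃ i, R + 1 ≤ (x i).natAbs := by
        by_contra hcon
        push Not at hcon
        apply hx
        rw [Box, Finset.mem_Icc]
        constructor <;> intro i <;> have := hcon i <;> simp only <;> omega
      have h1 : (u x : ENNReal) ^ (2 : ℝ) ≤ D / ((R + 1 : ℕ) : ENNReal) := by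
        rw [ENNReal.le_div_iff_mul_le (by simp) (by simp), mul_comm]
        refine le_trans ?_ ((decay hu x i).trans hD)
        gcongr
      have h2 : (u x : ENNReal) ^ (2 * σ + 2) =
          (u x : ENNReal) ^ (2 : ℝ) * ((u x : ENNReal) ^ (2 : ℝ)) ^ σ := by
        rw [← ENNReal.rpow_mul, ← ENNReal.rpow_add_of_nonneg _ _ (by norm_num) (by positivity),
          add_comm]
      rw [h2]
      gcongr
  calc Pw (2 * σ + 2) u ≤ _ := ENNReal.tsum_le_tsum hterm
    _ = ∑ x ∈ Box d R, (u x : ENNReal) ^ (2 * σ + 2) +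
        Pw 2 u * (D / ((R + 1 : ℕ) : ENNReal)) ^ σ := by
        rw [ENNReal.tsum_add, ENNReal.tsum_mul_right, tsum_eq_sum (s := Box d R)]
        · congr 1
          apply Finset.sum_congr rfl
          intro x hx
          rw [if_pos hx]
        · intro x hx
          rw [if_neg hx]
    _ ≤ _ := by gcongr

lemma tail_tendsto {σ : ℝ} (hσ : 0 < σ) {D : ENNReal} (hD : D ≠ ⊤) :
    Tendsto (fun R : ℕ => D * (D / ((R + 1 : ℕ) : ENNReal)) ^ σ) atTop (𝓝 0) := by
  have h1 : Tendsto (fun R : ℕ => D / ((R + 1 : ℕ) : ENNReal)) atTop (𝓝 0) := by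
    have h0 : Tendsto (fun R : ℕ => (((R + 1 : ℕ) : ENNReal))⁻¹) atTop (𝓝 0) :=
      ENNReal.tendsto_inv_nat_nhds_zero.comp (tendsto_add_atTop_nat 1)
    have := ENNReal.Tendsto.const_mul h0 (Or.inr hD)
    simpa [div_eq_mul_inv] using this
  have h2 := (ENNReal.continuous_rpow_const (y := σ)).tendsto 0 |>.comp h1
  rw [ENNReal.zero_rpow_of_pos hσ] at h2
  have := ENNReal.Tendsto.const_mul h2 (Or.inr hD)
  simpa using this

lemma Sym_closed : IsClosed {u : ZLat d → NNReal | Sym u} := by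
  unfold Sym
  simp only [Set.ofPred_forall]
  refine isClosed_iInter fun β => isClosed_iInter fun q => isClosed_iInter fun _ =>
    isClosed_iInter fun c => isClosed_iInter fun _ => isClosed_iInter fun x =>
    isClosed_iInter fun _ => ?_
  exact isClosed_le (continuous_apply _) (continuous_apply _)

lemma S_compact {σ : ℝ} (hσ : 0 < σ) {ω : NNReal} (hω : 0 < ω) {C : ENNReal} (hC : C ≠ ⊤) :
    IsCompact {u : ZLat d → NNReal | Sym u ∧ Pw (2 * σ + 2) u = 1 ∧ J ω u ≤ C} := by
  set D : ENNReal := C / ω with hDdef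
  have hω0 : (ω : ENNReal) ≠ 0 := by exact_mod_cast hω.ne'
  have hD : D ≠ ⊤ := ENNReal.div_ne_top hC hω0
  have hJ : ∀ u : ZLat d → NNReal, J ω u ≤ C → Pw 2 u ≤ D := by
    intro u hu
    rw [hDdef, ENNReal.le_div_iff_mul_le (Or.inl hω0) (Or.inl ENNReal.coe_ne_top), mul_comm]
    exact le_trans le_add_self hu
  have heq : {u : ZLat d → NNReal | Sym u ∧ Pw (2 * σ + 2) u = 1 ∧ J ω u ≤ C} =
      {u | Sym u} ∩ ({u | Pw (2 * σ + 2) u ≤ 1} ∩ ({u | J ω u ≤ C} ∩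
        ⋂ R : ℕ, {u | 1 ≤ ∑ x ∈ Box d R, (u x : ENNReal) ^ (2 * σ + 2) +
          D * (D / ((R + 1 : ℕ) : ENNReal)) ^ σ})) := by
    ext u
    simp only [Set.mem_ofPred_eq, Set.mem_inter_iff, Set.mem_iInter]
    constructor
    · rintro ⟨h1, h2, h3⟩
      exact ⟨h1, h2.le, h3, fun R => h2 ▸ tail hσ h1 (hJ u h3) R⟩
    · rintro ⟨h1, h2, h3, h4⟩
      refine ⟨h1, le_antisymm h2 ?_, h3⟩
      have ht := (tendsto_const_nhds (x := Pw (2 * σ + 2) u)).add (tail_tendsto hσ hD)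
      rw [add_zero] at ht
      refine ge_of_tendsto' ht fun R => (h4 R).trans ?_
      gcongr
      exact ENNReal.sum_le_tsum _
  have hclosed : IsClosed {u : ZLat d → NNReal | Sym u ∧ Pw (2 * σ + 2) u = 1 ∧ J ω u ≤ C} := by
    rw [heq]
    refine Sym_closed.inter (((lsc_Pw _).isClosed_preimage 1).inter
      (((lsc_J ω).isClosed_preimage C).inter (isClosed_iInter fun R => ?_)))
    refine isClosed_le continuous_const (Continuous.add ?_ continuous_const)
    exact continuous_finsetSum _ fun x _ => pow_cont _ x
  apply unit_compact.of_isClosed_subset hclosed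
  rintro u ⟨-, h2, -⟩ x
  exact le_one_of_Pw (by positivity) h2.le x

lemma F_le (a b : NNReal) : F a b ≤ (a : ENNReal) ^ (2 : ℝ) + (b : ENNReal) ^ (2 : ℝ) := by
  rw [F_eq, ENNReal.rpow_two, ENNReal.rpow_two]
  have : (a : ENNReal) ^ 2 + (b : ENNReal) ^ 2 = ENNReal.ofReal ((a : ℝ) ^ 2 + (b : ℝ) ^ 2) := by
    rw [ENNReal.ofReal_add (by positivity) (by positivity), ENNReal.ofReal_pow (by positivity),
      ENNReal.ofReal_pow (by positivity)]
    simp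
  rw [this]
  apply ENNReal.ofReal_le_ofReal
  have h1 : (0 : ℝ) ≤ a := a.2
  have h2 : (0 : ℝ) ≤ b := b.2
  nlinarith [mul_nonneg h1 h2]

lemma J_ne_top (ω : NNReal) {u : ZLat d → NNReal} (hu : Pw 2 u ≠ ⊤) : J ω u ≠ ⊤ := by
  refine ENNReal.add_ne_top.2 ⟨?_, ENNReal.mul_ne_top ENNReal.coe_ne_top hu⟩
  rw [grad_eq]
  have hc := ENNReal.tsum_comm (f := fun (x : ZLat d) (i : Fin d) => F (u (x + latE i)) (u x))
  simp only [tsum_fintype] at hc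
  rw [hc]
  refine (ENNReal.sum_lt_top.2 fun i _ => ?_).ne
  have h1 : ∑' x : ZLat d, F (u (x + latE i)) (u x) ≤ Pw 2 u + Pw 2 u := by
    refine (ENNReal.tsum_le_tsum fun x => F_le _ _).trans ?_
    rw [ENNReal.tsum_add]
    have := (Equiv.addRight (latE i)).tsum_eq (fun x : ZLat d => (u x : ENNReal) ^ (2 : ℝ))
    simp only [Equiv.coe_addRight] at this
    rw [this]
    exact le_rfl
  exact h1.trans_lt (ENNReal.add_lt_top.2 ⟨hu.lt_top, hu.lt_top⟩)

lemma J_trunc (ω : NNReal) (w : ZLat d → NNReal) (t : NNReal) :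
    J ω (fun x => w x - t) ≤ J ω w := by
  unfold J
  rw [grad_eq, grad_eq]
  gcongr with x i x
  · exact F_trunc _ _ _
  · exact tsub_le_self

lemma J_smul (ω : NNReal) (w : ZLat d → NNReal) (c : NNReal) :
    J ω (fun x => c * w x) = (c : ENNReal) ^ (2 : ℝ) * J ω w := by
  unfold J
  rw [grad_eq, grad_eq, mul_add, ← ENNReal.tsum_mul_left, mul_left_comm]
  simp only [F_smul, ← Finset.mul_sum, ENNReal.coe_mul, ENNReal.rpow_two, mul_pow,
    ENNReal.tsum_mul_left]

lemma Pw_smul {r : ℝ} (hr : 0 < r) (w : ZLat d → NNReal) (c : NNReal) :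
    Pw r (fun x => c * w x) = (c : ENNReal) ^ r * Pw r w := by
  unfold Pw
  rw [← ENNReal.tsum_mul_left]
  simp only [ENNReal.coe_mul, ENNReal.mul_rpow_of_nonneg _ _ hr.le]

lemma trunc_exists {r : ℝ} {w : ZLat d → NNReal} (hP : Pw r w = 1)
    {θ : ENNReal} (hθ : θ < 1) : ∃ t : NNReal, 0 < t ∧ θ < Pw r (fun x => w x - t) := by
  have h1 : θ < ⨆ s : Finset (ZLat d), ∑ x ∈ s, (w x : ENNReal) ^ r := by
    rw [← ENNReal.tsum_eq_iSup_sum]; exact hθ.trans_eq hP.symm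
  obtain ⟨s, hs⟩ := lt_iSup_iff.1 h1
  have hc : Continuous fun t : NNReal => ∑ x ∈ s, ((w x - t : NNReal) : ENNReal) ^ r := by
    refine continuous_finsetSum _ fun x _ => ENNReal.continuous_rpow_const.comp
      (ENNReal.continuous_coe.comp ?_)
    exact continuous_const.sub continuous_id
  have hev : ∀ᶠ t in 𝓝[>] (0 : NNReal), θ < ∑ x ∈ s, ((w x - t : NNReal) : ENNReal) ^ r := by
    apply nhdsWithin_le_nhds
    apply hc.continuousAt.eventually_const_lt
    simpa using hs
  obtain ⟨t, ht, ht0⟩ := (hev.and self_mem_nhdsWithin).exists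
  exact ⟨t, ht0, ht.trans_le (ENNReal.sum_le_tsum _)⟩

lemma approx {r : ℝ} (hr : 0 < r) (ω : NNReal) {w : ZLat d → NNReal} (h2 : Pw 2 w ≠ ⊤)
    (hP : Pw r w = 1) {θ : ENNReal} (hθ : θ < 1) :
    ∃ u : ZLat d → NNReal, Sym u ∧ Pw r u = 1 ∧ θ ^ (2 / r) * J ω u ≤ J ω w := by
  obtain ⟨t, ht, hθt⟩ := trunc_exists hP hθ
  set w' : ZLat d → NNReal := fun x => w x - t with hw'
  have hA1 : Pw r w' ≤ 1 := by
    rw [← hP]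
    refine ENNReal.tsum_le_tsum fun x => ?_
    have : w' x ≤ w x := tsub_le_self
    gcongr
  have hA0 : Pw r w' ≠ 0 := (bot_le.trans_lt hθt).ne'
  have hAt : Pw r w' ≠ ⊤ := ne_top_of_le_ne_top ENNReal.one_ne_top hA1
  have hsupp : {x | w' x ≠ 0}.Finite := by
    have hfin := ENNReal.finite_const_le_of_tsum_ne_top (ε := (t : ENNReal) ^ (2 : ℝ)) h2 (by
      simp [ht.ne'])
    refine hfin.subset fun x hx => ?_
    have : t < w x := by
      by_contra hcon
      push Not at hcon
      exact hx (tsub_eq_zero_of_le hcon)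
    simp only [Set.mem_ofPred_eq]
    gcongr
  set c : NNReal := (Pw r w' ^ (-(1 / r))).toNNReal with hcdef
  have hc : (c : ENNReal) = Pw r w' ^ (-(1 / r)) := by
    rw [hcdef, ENNReal.coe_toNNReal]
    exact ENNReal.rpow_ne_top_of_ne_zero hA0 hAt
  have hc1 : Pw r (fun x => c * w' x) = 1 := by
    rw [Pw_smul hr, hc, ← ENNReal.rpow_mul]
    have : -(1 / r) * r = -1 := by field_simp
    rw [this, ENNReal.rpow_neg_one, ENNReal.inv_mul_cancel hA0 hAt]
  obtain ⟨u, hu1, hu2, hu3⟩ := fin_sym hr ω (w := fun x => c * w' x)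
    (hsupp.subset fun x hx => right_ne_zero_of_mul hx) hc1
  refine ⟨u, hu1, hu2, ?_⟩
  rw [J_smul] at hu3
  calc θ ^ (2 / r) * J ω u ≤ Pw r w' ^ (2 / r) * ((c : ENNReal) ^ (2 : ℝ) * J ω w) := by
        have := J_trunc ω w t
        gcongr
        exact hu3.trans (by gcongr)
    _ = J ω w := by
        rw [hc, ← ENNReal.rpow_mul, ← mul_assoc, ← ENNReal.rpow_add _ _ hA0 hAt]
        have : 2 / r + -(1 / r) * 2 = 0 := by ring
        rw [this]; simp

lemma main (σ : ℝ) (hσ : 0 < σ) (ω : NNReal) (hω : 0 < ω) :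
    ∃ u : ZLat d → NNReal, Sym u ∧ Pw 2 u < ⊤ ∧ Pw (2 * σ + 2) u = 1 ∧
      ∀ w : ZLat d → NNReal, Pw 2 w < ⊤ → Pw (2 * σ + 2) w = 1 → J ω u ≤ J ω w := by
  classical
  have hr : 0 < 2 * σ + 2 := by positivity
  have hδ : ∀ s : ℝ, 0 < s → Pw s (fun x : ZLat d => if x = 0 then (1 : NNReal) else 0) = 1 := by
    intro s hs
    rw [Pw, tsum_eq_single 0]
    · simp
    · intro x hx; simp [hx, hs]
  set δ : ZLat d → NNReal := fun x : ZLat d => if x = 0 then (1 : NNReal) else 0 with hδdef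
  have hC : J ω δ ≠ ⊤ := J_ne_top ω (by rw [hδ 2 (by norm_num)]; simp)
  obtain ⟨u₀, h01, h02, h03⟩ := fin_sym hr ω (w := δ) ((Set.finite_singleton 0).subset (by
    intro x hx
    by_contra hne
    exact hx (if_neg hne))) (hδ _ hr)
  have hne : {u : ZLat d → NNReal | Sym u ∧ Pw (2 * σ + 2) u = 1 ∧ J ω u ≤ J ω δ}.Nonempty :=
    ⟨u₀, h01, h02, h03⟩
  obtain ⟨u, ⟨hu1, hu2, hu3⟩, hmin⟩ := LowerSemicontinuousOn.exists_isMinOn hne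
    (S_compact hσ hω hC) ((lsc_J ω).lowerSemicontinuousOn _)
  have hJu : J ω u ≠ ⊤ := ne_top_of_le_ne_top hC hu3
  refine ⟨u, hu1, ?_, hu2, ?_⟩
  · have h1 : (ω : ENNReal) * Pw 2 u ≤ J ω u := le_add_self
    rw [lt_top_iff_ne_top]
    intro htop
    rw [htop, ENNReal.mul_top (by exact_mod_cast hω.ne')] at h1
    exact hJu (top_le_iff.1 h1)
  · intro w hw2 hwP
    have key : ∀ θ : ENNReal, θ < 1 → θ ^ (2 / (2 * σ + 2)) * J ω u ≤ J ω w := by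
      intro θ hθ
      obtain ⟨u', h1, h2, h3⟩ := approx hr ω hw2.ne hwP hθ
      refine le_trans ?_ h3
      gcongr
      rcases le_total (J ω u') (J ω δ) with h | h
      · exact hmin ⟨h1, h2, h⟩
      · exact hu3.trans h
    have hcont : Continuous fun θ : ENNReal => θ ^ (2 / (2 * σ + 2)) * J ω u :=
      (ENNReal.continuous_mul_const hJu).comp ENNReal.continuous_rpow_const
    have ht : Tendsto (fun θ : ENNReal => θ ^ (2 / (2 * σ + 2)) * J ω u) (𝓝[<] 1)
        (𝓝 (J ω u)) := by
      have := (hcont.tendsto 1).mono_left (nhdsWithin_le_nhds (s := Set.Iio 1))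
      simpa using this
    have : (𝓝[<] (1 : ENNReal)).NeBot := nhdsLT_neBot_of_exists_lt ⟨0, by simp⟩
    exact le_of_tendsto ht (by filter_upwards [self_mem_nhdsWithin] with θ hθ using key θ hθ)

end final

end S19

/-- The constrained minimization problem
I_ω = inf{‖∇u‖₂² + ω‖u‖₂² : ‖u‖_{2σ+2} = 1} admits a Schwarz symmetric minimizer. -/
theorem stmt19 (d : ℕ) (hd : 2 ≤ d) (σ : ℝ) (hσ : 0 < σ) (ω : NNReal) (hω : 0 < ω) :
    ∃ u : ZLat d → NNReal,
      (∑' x : ZLat d, (u x : ENNReal) ^ (2 : ℝ)) < ⊤ ∧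
      (∑' x : ZLat d, (u x : ENNReal) ^ (2 * σ + 2)) ^ (1 / (2 * σ + 2)) = 1 ∧
      RZd d u = u ∧
      gradEnergy d 2 u + (ω : ENNReal) * ∑' x : ZLat d, (u x : ENNReal) ^ (2 : ℝ) =
        ⨅ (w : ZLat d → NNReal)
          (_ : (∑' x : ZLat d, (w x : ENNReal) ^ (2 : ℝ)) < ⊤ ∧
            (∑' x : ZLat d, (w x : ENNReal) ^ (2 * σ + 2)) ^ (1 / (2 * σ + 2)) = 1),
          gradEnergy d 2 w + (ω : ENNReal) * ∑' x : ZLat d, (w x : ENNReal) ^ (2 : ℝ) := by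
  obtain ⟨u, h1, h2, h3, h4⟩ := S19.main (d := d) σ hσ ω hω
  have hr : 0 < 2 * σ + 2 := by positivity
  refine ⟨u, h2, ?_, S19.RZd_eq hd h1, ?_⟩
  · change (S19.Pw (2 * σ + 2) u) ^ (1 / (2 * σ + 2)) = 1
    rw [h3, ENNReal.one_rpow]
  · apply le_antisymm
    · refine le_iInf₂ fun w hw => h4 w hw.1 ?_
      have h5 : (S19.Pw (2 * σ + 2) w) ^ (1 / (2 * σ + 2)) = 1 := hw.2
      have h6 := congrArg (fun t : ENNReal => t ^ (2 * σ + 2)) h5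
      simp only [← ENNReal.rpow_mul, ENNReal.one_rpow] at h6
      rwa [one_div_mul_cancel hr.ne', ENNReal.rpow_one] at h6
    · refine iInf₂_le u ⟨h2, ?_⟩
      change (S19.Pw (2 * σ + 2) u) ^ (1 / (2 * σ + 2)) = 1
      rw [h3, ENNReal.one_rpow]

end
end
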